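/- ∫₀¹ [₂F₁(1/3,2/3;1|x)]²·(1−x)^{−1/2} dx = (9/√π)·[ (√3/64)·(Γ(1/3)/√π)⁹·₄F₃(1/6,1/3,1/3,1/2; 2/3,5/6,5/6 | 1) − (16/3)·(√π/Γ(1/3))⁹·₄F₃(1/2,2/3,2/3,5/6; 7/6,7/6,4/3 | 1) ]. -/

import Mathlib

open Real MeasureTheory Set

/-- Modified Bessel function `I₀(t) = (1/π)∫₀^π exp(t cos θ) dθ`. -/
noncomputable def I0 (t : ℝ) : ℝ := (1 / π) * ∫ θ in (0:ℝ)..π, exp (t * cos θ)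

/-- Modified Bessel function `K₀(t) = ∫₀^∞ exp(−t cosh u) du`. -/
noncomputable def K0 (t : ℝ) : ℝ := ∫ u in Ioi (0:ℝ), exp (-(t * Real.cosh u))

/-- Rising factorial `(a)ₙ = a(a+1)⋯(a+n−1)`. -/
noncomputable def ris (a : ℝ) (n : ℕ) : ℝ := ∏ k ∈ Finset.range n, (a + k)

/-- Generalized hypergeometric series `ₚF_q(a; b | x)`. -/
noncomputable def pFq (a b : List ℝ) (x : ℝ) : ℝ :=
  ∑' n : ℕ, ((a.map fun p => ris p n).prod / (b.map fun q => ris q n).prod) * x ^ n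
    / (n.factorial : ℝ)

/-!
Write `G t` for the Legendre function `₂F₁(b, 1 - b; 1 | cos² (t / 2))` on `[0, π]`. The
substitution `x = sin² (t / 2)` turns the integral into `∫ sin (t / 2) * G (π - t) ^ 2`. The cosine
moments of `G` satisfy a first-order recurrence, from which the twisted function
`h t = G t + exp (I * π * b) * G (π - t)` has only the frequencies `b + 2 * k` with `0 ≤ k`, and
explicit beta-function coefficients. Expanding both factors `h` in `∫ sin (t / 2) * h t ^ 2` by
Parseval gives a double series with positive terms. Writing the terms as beta integrals turns that
series, and also the single series `₄F₃` at `1`, into a triple integral; the innermost integrals are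
two forms of one elliptic integral. Comparing imaginary parts for `b` and `1 - b` removes the cross
term `G t * G (π - t)`, and `b = 1 / 3` gives the theorem.
-/

section RisingFactorial

lemma ris_succ (a : ℝ) (n : ℕ) : ris a (n + 1) = ris a n * (a + n) :=
  Finset.prod_range_succ _ _

lemma ris_pos {a : ℝ} (ha : 0 < a) (n : ℕ) : 0 < ris a n :=
  Finset.prod_pos fun _ _ => by positivity

lemma ascPochhammer_eval_eq_ris (a : ℝ) (n : ℕ) : (ascPochhammer ℝ n).eval a = ris a n := by
  induction n with
  | zero => simp [ris]
  | succ n ih => rw [ascPochhammer_succ_eval, ih, ris_succ]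

lemma multichoose_eq_ris_div_factorial (a : ℝ) (n : ℕ) :
    Ring.multichoose a n = ris a n / n.factorial := by
  rw [eq_div_iff (by positivity), mul_comm, ← nsmul_eq_mul,
    Ring.factorial_nsmul_multichoose_eq_ascPochhammer, Polynomial.ascPochhammer_smeval_eq_eval,
    ascPochhammer_eval_eq_ris]

lemma multichoose_pos {a : ℝ} (ha : 0 < a) (n : ℕ) : 0 < Ring.multichoose a n := by
  rw [multichoose_eq_ris_div_factorial]
  exact div_pos (ris_pos ha n) (by positivity)

lemma multichoose_succ_mul (a : ℝ) (n : ℕ) :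
    Ring.multichoose a (n + 1) * (n + 1) = Ring.multichoose a n * (a + n) := by
  simp only [multichoose_eq_ris_div_factorial, ris_succ, Nat.factorial_succ]
  push_cast
  field_simp

lemma hasSum_multichoose_mul_pow (a : ℝ) {y : ℝ} (hy : |y| < 1) :
    HasSum (fun n => Ring.multichoose a n * y ^ n) ((1 - y) ^ (-a)) := by
  have h := (Real.one_div_one_sub_rpow_hasFPowerSeriesOnBall_zero a).hasSum (y := y)
    (by simpa [Metric.mem_eball, edist_dist] using hy)
  simp only [FormalMultilinearSeries.ofScalars_apply_eq, ← Ring.multichoose_eq, zero_add,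
    smul_eq_mul] at h
  rwa [rpow_neg (by linarith [abs_lt.1 hy]), ← one_div]

lemma tsum_ofReal_multichoose_mul_pow {a y : ℝ} (ha : 0 < a) (hy₀ : 0 ≤ y) (hy₁ : y < 1) :
    ∑' n, ENNReal.ofReal (Ring.multichoose a n * y ^ n) = ENNReal.ofReal ((1 - y) ^ (-a)) := by
  have h := hasSum_multichoose_mul_pow a (abs_lt.2 ⟨by linarith, hy₁⟩)
  rw [← h.tsum_eq, ENNReal.ofReal_tsum_of_nonneg _ h.summable]
  exact fun n => mul_nonneg (multichoose_pos ha n).le (by positivity)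

lemma pFq_perm {a a' b b' : List ℝ} (ha : a.Perm a') (hb : b.Perm b') (x : ℝ) :
    pFq a b x = pFq a' b' x := by
  simp only [pFq, (ha.map _).prod_eq, (hb.map _).prod_eq]

end RisingFactorial

section Beta

open ProbabilityTheory

lemma beta_add_one {s w : ℝ} (hs : 0 < s) (hw : 0 < w) :
    beta (s + 1) w = beta s w * s / (s + w) := by
  rw [beta, beta, add_right_comm, Gamma_add_one hs.ne', Gamma_add_one (by positivity)]
  have : Gamma (s + w) ≠ 0 := (Gamma_pos_of_pos (by positivity)).ne'
  field_simp

lemma beta_add_natCast {s w : ℝ} (hs : 0 < s) (hw : 0 < w) (n : ℕ) :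
    beta (s + n) w = beta s w * ris s n / ris (s + w) n := by
  induction n with
  | zero => simp [ris]
  | succ n ih =>
    have := ris_pos (add_pos hs hw) n
    rw [Nat.cast_succ, ← add_assoc, beta_add_one (by positivity) hw, ih, ris_succ, ris_succ]
    field_simp
    ring

lemma beta_one_right {s : ℝ} (hs : 0 < s) : beta s 1 = 1 / s := by
  have := Gamma_pos_of_pos hs
  rw [beta, Gamma_add_one hs.ne', Gamma_one]
  field_simp

lemma lintegral_rpow_mul_one_sub_rpow {s w : ℝ} (hs : 0 < s) (hw : 0 < w) :
    ∫⁻ t in Ioo (0 : ℝ) 1, ENNReal.ofReal (t ^ (s - 1) * (1 - t) ^ (w - 1)) =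
      ENNReal.ofReal (beta s w) := by
  have hβ := beta_pos hs hw
  have h := lintegral_betaPDF_eq_one hs hw
  simp_rw [lintegral_betaPDF, mul_assoc, ENNReal.ofReal_mul (one_div_nonneg.2 hβ.le)] at h
  rw [lintegral_const_mul _ (by fun_prop), one_div, ENNReal.ofReal_inv_of_pos hβ, mul_comm,
    ← div_eq_mul_inv, ENNReal.div_eq_one_iff (by simpa using hβ) ENNReal.ofReal_ne_top] at h
  exact h

lemma lintegral_rpow_sub_one {s : ℝ} (hs : 0 < s) :
    ∫⁻ t in Ioo (0 : ℝ) 1, ENNReal.ofReal (t ^ (s - 1)) = ENNReal.ofReal (1 / s) := by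
  simpa [beta_one_right hs] using lintegral_rpow_mul_one_sub_rpow hs one_pos

lemma lintegral_Ioo_zero_eq_mul_lintegral_comp_mul {r : ℝ} (hr : 0 < r) (f : ℝ → ENNReal) :
    ∫⁻ t in Ioo 0 r, f t = ∫⁻ t in Ioo 0 1, ENNReal.ofReal r * f (r * t) := by
  have himage : (r * ·) '' Ioo 0 1 = Ioo 0 r := by
    simpa using Set.image_mul_left_Ioo hr 0 1
  rw [← himage, lintegral_image_eq_lintegral_deriv_mul_of_monotoneOn measurableSet_Ioo
    (fun t _ => by simpa using ((hasDerivAt_id t).const_mul r).hasDerivWithinAt)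
    fun _ _ _ _ h => mul_le_mul_of_nonneg_left h hr.le]

lemma lintegral_rpow_mul_one_sub_div_rpow {r s w : ℝ} (hr : 0 < r) (hs : 0 < s) (hw : 0 < w) :
    ∫⁻ t in Ioo 0 r, ENNReal.ofReal (t ^ (s - 1) * (1 - t / r) ^ (w - 1)) =
      ENNReal.ofReal (r ^ s * beta s w) := by
  rw [lintegral_Ioo_zero_eq_mul_lintegral_comp_mul hr, ENNReal.ofReal_mul (by positivity),
    ← lintegral_rpow_mul_one_sub_rpow hs hw, ← lintegral_const_mul _ (by fun_prop)]
  refine setLIntegral_congr_fun measurableSet_Ioo fun t ht => ?_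
  rw [← ENNReal.ofReal_mul (by positivity), ← ENNReal.ofReal_mul (by positivity),
    mul_rpow hr.le ht.1.le, mul_div_cancel_left₀ _ hr.ne', rpow_sub_one hr.ne']
  congr 1
  field_simp

lemma tsum_ofReal_multichoose_div {a s : ℝ} (ha₀ : 0 < a) (ha₁ : a < 1) (hs : 0 < s) :
    ∑' n : ℕ, ENNReal.ofReal (Ring.multichoose a n / (s + n)) =
      ENNReal.ofReal (beta s (1 - a)) := by
  have hseries : ∀ t ∈ Ioo (0 : ℝ) 1, ENNReal.ofReal (t ^ (s - 1) * (1 - t) ^ (1 - a - 1)) =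
      ∑' n : ℕ, ENNReal.ofReal (Ring.multichoose a n) * ENNReal.ofReal (t ^ (s + n - 1)) := by
    intro t ht
    rw [ENNReal.ofReal_mul (rpow_nonneg ht.1.le _), show 1 - a - 1 = -a by ring,
      ← tsum_ofReal_multichoose_mul_pow ha₀ ht.1.le ht.2, ← ENNReal.tsum_mul_left]
    congr! 2 with n
    rw [ENNReal.ofReal_mul (multichoose_pos ha₀ n).le, add_sub_right_comm, rpow_add ht.1,
      rpow_natCast, ENNReal.ofReal_mul (rpow_nonneg ht.1.le _)]
    ring
  rw [← lintegral_rpow_mul_one_sub_rpow hs (sub_pos.2 ha₁),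
    setLIntegral_congr_fun measurableSet_Ioo hseries, lintegral_tsum fun n => by fun_prop]
  congr! 2 with n
  rw [lintegral_const_mul _ (by fun_prop), lintegral_rpow_sub_one (by positivity),
    ← ENNReal.ofReal_mul (multichoose_pos ha₀ n).le, mul_one_div]

end Beta

section ChangeOfVariables

lemma lintegral_Ioo_eq_lintegral_neg_deriv_mul {f f' : ℝ → ℝ} {a b : ℝ} (hab : a < b)
    (hf : ContinuousOn f (Icc a b)) (hderiv : ∀ x ∈ Ioo a b, HasDerivAt f (f' x) x)
    (hneg : ∀ x ∈ Ioo a b, f' x < 0) (g : ℝ → ENNReal) :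
    ∫⁻ y in Ioo (f b) (f a), g y = ∫⁻ x in Ioo a b, ENNReal.ofReal (-f' x) * g (f x) := by
  have hanti : StrictAntiOn f (Icc a b) := by
    refine strictAntiOn_of_deriv_neg (convex_Icc a b) hf fun x hx => ?_
    rw [interior_Icc] at hx
    exact (hderiv x hx).deriv ▸ hneg x hx
  have himage : f '' Ioo a b = Ioo (f b) (f a) := by
    refine Subset.antisymm ?_ (intermediate_value_Ioo' hab.le hf)
    rintro _ ⟨x, hx, rfl⟩
    exact ⟨hanti (Ioo_subset_Icc_self hx) (right_mem_Icc.2 hab.le) hx.2,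
      hanti (left_mem_Icc.2 hab.le) (Ioo_subset_Icc_self hx) hx.1⟩
  rw [← himage, lintegral_image_eq_lintegral_deriv_mul_of_antitoneOn measurableSet_Ioo
    (fun x hx => (hderiv x hx).hasDerivWithinAt) (hanti.antitoneOn.mono Ioo_subset_Icc_self)]

lemma rpow_neg_half_sq {c : ℝ} (hc : 0 < c) : (c ^ 2) ^ (-(1 / 2) : ℝ) = 1 / c := by
  rw [← rpow_natCast, ← rpow_mul hc.le, Nat.cast_ofNat,
    show (2 : ℝ) * -(1 / 2) = -1 by norm_num, rpow_neg_one, one_div]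

lemma rpow_neg_half_cube {r : ℝ} (hr : 0 < r) :
    (r ^ 3) ^ (-(1 / 2) : ℝ) = r ^ (-(3 / 2) : ℝ) := by
  rw [← rpow_natCast, ← rpow_mul hr.le]
  norm_num

/-- The integrand of the elliptic integral over `0 < m < (1 - T) ^ 2 / T` through which two
differently shaped elliptic integrals over `(T, 1)` are compared. -/
noncomputable def ellipticDensity (S T m : ℝ) : ENNReal :=
  ENNReal.ofReal ((m * ((1 - T) ^ 2 - T * m) * ((1 - S) ^ 2 - S * m)) ^ (-(1 / 2) : ℝ))

variable {S T : ℝ}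

lemma hasDerivAt_one_sub_sq_div_self {r : ℝ} (hr : r ≠ 0) :
    HasDerivAt (fun r => (1 - r) ^ 2 / r) (-((1 - r) * (1 + r) / r ^ 2)) r := by
  refine ((((hasDerivAt_id' r).const_sub 1).fun_pow 2).fun_div (hasDerivAt_id' r) hr).congr_deriv ?_
  field_simp
  ring

lemma hasDerivAt_mul_one_sub_div_sub (c d : ℝ) {v : ℝ} (hv : v - d ≠ 0) :
    HasDerivAt (fun v => c * (1 - v) / (v - d)) (-(c * (1 - d) / (v - d) ^ 2)) v := by
  refine ((((hasDerivAt_id' v).const_sub 1).const_mul c).fun_div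
    ((hasDerivAt_id' v).sub_const d) hv).congr_deriv ?_
  field_simp
  ring

lemma lintegral_ellipticDensity_eq_palindromic (hS : 0 < S) (hST : S ≤ T) (hT : T < 1) :
    ∫⁻ m in Ioo 0 ((1 - T) ^ 2 / T), ellipticDensity S T m =
      ∫⁻ r in Ioo T 1, ENNReal.ofReal ((1 + r) *
        (r * (r - T) * (r - S) * (1 - r * T) * (1 - r * S)) ^ (-(1 / 2) : ℝ)) := by
  have hT₀ : 0 < T := hS.trans_le hST
  have hsubst := lintegral_Ioo_eq_lintegral_neg_deriv_mul (f := fun r => (1 - r) ^ 2 / r)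
    (f' := fun r => -((1 - r) * (1 + r) / r ^ 2)) hT
    (ContinuousOn.div (by fun_prop) (by fun_prop) fun r hr => (hT₀.trans_le hr.1).ne')
    (fun r hr => hasDerivAt_one_sub_sq_div_self (hT₀.trans hr.1).ne')
    (fun r hr => by
      have hr₀ : 0 < r := hT₀.trans hr.1
      have hr₁ : 0 < 1 - r := sub_pos.2 hr.2
      exact neg_lt_zero.2 (by positivity))
    (ellipticDensity S T)
  simp only [sub_self, ne_eq, OfNat.ofNat_ne_zero, not_false_eq_true, zero_pow, zero_div] at hsubst
  refine hsubst.trans (setLIntegral_congr_fun measurableSet_Ioo fun r ⟨hTr, hr₁⟩ => ?_)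
  have hr₀ : 0 < r := hT₀.trans hTr
  have hSr : 0 < r - S := by linarith
  have hrT : 0 < 1 - r * T := by nlinarith
  have hrS : 0 < 1 - r * S := by nlinarith
  have hfactor : (1 - r) ^ 2 / r * ((1 - T) ^ 2 - T * ((1 - r) ^ 2 / r)) *
      ((1 - S) ^ 2 - S * ((1 - r) ^ 2 / r)) =
      ((1 - r) / r ^ 2) ^ 2 * (r * (r - T) * (r - S) * (1 - r * T) * (1 - r * S)) := by
    field_simp
    ring
  rw [ellipticDensity, neg_neg, ← ENNReal.ofReal_mul (by positivity), hfactor,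
    mul_rpow (by positivity) (by positivity), rpow_neg_half_sq (by positivity)]
  congr 1
  field_simp

lemma lintegral_ellipticDensity_eq_quartic (hS : 0 < S) (hST : S ≤ T) (hT : T < 1) :
    ∫⁻ m in Ioo 0 ((1 - T) ^ 2 / T), ellipticDensity S T m =
      ∫⁻ v in Ioo T 1, ENNReal.ofReal
        (((v - T) * (v - S) * (v - T * S) * (1 - v)) ^ (-(1 / 2) : ℝ)) := by
  have hT₀ : 0 < T := hS.trans_le hST
  have hS₁ : 0 < 1 - S := by linarith
  have hT₁ : 0 < 1 - T := by linarith
  have hTS : T * S < T := by nlinarith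
  have hTS₁ : 0 < 1 - T * S := by linarith
  have hsubst := lintegral_Ioo_eq_lintegral_neg_deriv_mul
    (f := fun v => (1 - T) * (1 - S) * (1 - v) / (v - T * S))
    (f' := fun v => -((1 - T) * (1 - S) * (1 - T * S) / (v - T * S) ^ 2)) hT
    (ContinuousOn.div (by fun_prop) (by fun_prop) fun v hv => (sub_pos.2 (hTS.trans_le hv.1)).ne')
    (fun v hv => hasDerivAt_mul_one_sub_div_sub _ _ (sub_pos.2 (hTS.trans hv.1)).ne')
    (fun v hv => by
      have hv₀ : 0 < v - T * S := sub_pos.2 (hTS.trans hv.1)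
      exact neg_lt_zero.2 (by positivity))
    (ellipticDensity S T)
  have hend : (1 - T) * (1 - S) * (1 - T) / (T - T * S) = (1 - T) ^ 2 / T := by
    rw [show T - T * S = T * (1 - S) by ring]
    field_simp
  simp only [sub_self, mul_zero, zero_div, hend] at hsubst
  refine hsubst.trans (setLIntegral_congr_fun measurableSet_Ioo fun v ⟨hTv, hv₁⟩ => ?_)
  have hSv : 0 < v - S := by linarith
  have hTSv : 0 < v - T * S := by linarith
  have hfactor : (1 - T) * (1 - S) * (1 - v) / (v - T * S) *
      ((1 - T) ^ 2 - T * ((1 - T) * (1 - S) * (1 - v) / (v - T * S))) *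
      ((1 - S) ^ 2 - S * ((1 - T) * (1 - S) * (1 - v) / (v - T * S))) =
      ((1 - T) * (1 - S) * (1 - T * S) / (v - T * S) ^ 2) ^ 2 *
        ((v - T) * (v - S) * (v - T * S) * (1 - v)) := by
    field_simp
    ring
  rw [ellipticDensity, neg_neg, ← ENNReal.ofReal_mul (by positivity), hfactor,
    mul_rpow (by positivity) (by positivity), rpow_neg_half_sq (by positivity)]
  congr 1
  field_simp

lemma lintegral_Ioo_lintegral_Ioo_swap {f : ℝ → ℝ → ENNReal}
    (hf : Measurable (Function.uncurry f)) (a b c : ℝ) :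
    ∫⁻ r in Ioo a c, ∫⁻ s in Ioo b r, f r s =
      ∫⁻ s in Ioo b c, ∫⁻ r in Ioo (max a s) c, f r s := by
  have hleft : ∀ r ∈ Ioo a c, ∫⁻ s in Ioo b r, f r s =
      ∫⁻ s in Ioo b c, {p : ℝ × ℝ | p.2 < p.1}.indicator (Function.uncurry f) (r, s) := by
    intro r hr
    have hset : Ioo b r = Iio r ∩ Ioo b c := by
      rw [inter_comm, Ioo_inter_Iio, min_eq_right hr.2.le]
    rw [hset, ← setLIntegral_indicator measurableSet_Iio]
    rfl
  have hright : ∀ s ∈ Ioo b c, ∫⁻ r in Ioo (max a s) c, f r s =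
      ∫⁻ r in Ioo a c, {p : ℝ × ℝ | p.2 < p.1}.indicator (Function.uncurry f) (r, s) := by
    intro s _
    have hset : Ioo (max a s) c = Ioi s ∩ Ioo a c := by
      rw [Ioi_inter_Ioo, sup_comm]
    rw [hset, ← setLIntegral_indicator measurableSet_Ioi]
    rfl
  rw [setLIntegral_congr_fun measurableSet_Ioo hleft,
    setLIntegral_congr_fun measurableSet_Ioo hright]
  exact lintegral_lintegral_swap
    (hf.indicator (measurableSet_lt measurable_snd measurable_fst)).aemeasurable

lemma lintegral_Ioo_lintegral_Ioo_lintegral_Ioo_swap {K : ℝ → ℝ → ℝ → ENNReal}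
    (hK : Measurable fun p : (ℝ × ℝ) × ℝ => K p.1.1 p.1.2 p.2) (c : ℝ) :
    ∫⁻ r in Ioo 0 c, ∫⁻ T in Ioo 0 r, ∫⁻ S in Ioo 0 r, K r T S =
      ∫⁻ T in Ioo 0 c, ∫⁻ S in Ioo 0 c, ∫⁻ r in Ioo (max T S) c, K r T S := by
  have hinner : Measurable fun p : ℝ × ℝ => ∫⁻ S in Ioo 0 p.1, K p.1 p.2 S := by
    have hset : MeasurableSet {p : (ℝ × ℝ) × ℝ | 0 < p.2 ∧ p.2 < p.1.1} :=
      (measurableSet_lt measurable_const measurable_snd).inter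
        (measurableSet_lt measurable_snd measurable_fst.fst)
    simp_rw [← lintegral_indicator measurableSet_Ioo]
    exact (hK.indicator hset).lintegral_prod_right'
  rw [lintegral_Ioo_lintegral_Ioo_swap (f := fun r T => ∫⁻ S in Ioo 0 r, K r T S) hinner]
  refine setLIntegral_congr_fun measurableSet_Ioo fun T hT => ?_
  rw [max_eq_right hT.1.le]
  exact lintegral_Ioo_lintegral_Ioo_swap (f := fun r S => K r T S)
    (hK.comp (by fun_prop : Measurable fun p : ℝ × ℝ => ((p.1, T), p.2))) T 0 c

end ChangeOfVariables

section DoubleSum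

open ProbabilityTheory

/-- The coefficient `(1/2)ₙ / n! · B(b + n, 1/2)`, up to a factor the `n`-th Fourier coefficient of
the twisted Legendre function. -/
noncomputable def betaWeight (b : ℝ) (n : ℕ) : ℝ :=
  Ring.multichoose (1 / 2 : ℝ) n * beta (b + n) (1 / 2)

lemma betaWeight_pos {b : ℝ} (hb : 0 < b) (n : ℕ) : 0 < betaWeight b n :=
  mul_pos (multichoose_pos (by norm_num) n) (beta_pos (by positivity) (by norm_num))

/-- The general term of the single series obtained from the double series of the products
`betaWeight b j * betaWeight b k`. -/
noncomputable def tripleBetaTerm (b : ℝ) (n : ℕ) : ℝ :=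
  Ring.multichoose (1 / 2 : ℝ) n * beta (b + n) (1 / 2) ^ 2 * beta (2 * b + n - 1 / 2) (1 / 2)

/-- The sum `1 / (l - 1/2) + 1 / (l + 1/2)`, which occurs both as `∫₀¹ rˡ (1 + r) r ^ (-3/2) dr` and
as a Fourier coefficient of `sin (t / 2)`. -/
noncomputable def reciprocalPair (l : ℝ) : ℝ := 1 / (l - 1 / 2) + 1 / (l + 1 / 2)

lemma lintegral_rpow_mul_one_add_mul_rpow {l : ℝ} (hl : 1 / 2 < l) :
    ∫⁻ r in Ioo (0 : ℝ) 1, ENNReal.ofReal (r ^ l * ((1 + r) * r ^ (-(3 / 2) : ℝ))) =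
      ENNReal.ofReal (reciprocalPair l) := by
  have hl₁ : 0 < l - 1 / 2 := by linarith
  have hl₂ : 0 < l + 1 / 2 := by linarith
  rw [reciprocalPair, ENNReal.ofReal_add (by positivity) (by positivity),
    ← lintegral_rpow_sub_one hl₁, ← lintegral_rpow_sub_one hl₂, ← lintegral_add_left (by fun_prop)]
  refine setLIntegral_congr_fun measurableSet_Ioo fun r ⟨hr, _⟩ => ?_
  have hlow : r ^ (l - 1 / 2 - 1) = r ^ l * r ^ (-(3 / 2) : ℝ) := by
    rw [← rpow_add hr]
    ring_nf
  have hhigh : r ^ (l + 1 / 2 - 1) = r ^ l * r ^ (-(3 / 2) : ℝ) * r := by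
    rw [← hlow, ← rpow_add_one hr.ne']
    ring_nf
  rw [← ENNReal.ofReal_add (by positivity) (by positivity), hlow, hhigh]
  ring_nf

/-- The unnormalised density on `(0, r)` of a `Beta(s, 1/2)` variable scaled by `r`. -/
noncomputable def betaDensity (s r t : ℝ) : ENNReal :=
  ENNReal.ofReal (t ^ (s - 1) * (1 - t / r) ^ (-(1 / 2) : ℝ))

@[fun_prop]
lemma measurable_betaDensity (s r : ℝ) : Measurable (betaDensity s r) := by
  unfold betaDensity
  fun_prop

lemma lintegral_betaDensity {r s : ℝ} (hr : 0 < r) (hs : 0 < s) :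
    ∫⁻ t in Ioo 0 r, betaDensity s r t = ENNReal.ofReal (r ^ s * beta s (1 / 2)) := by
  convert lintegral_rpow_mul_one_sub_div_rpow hr hs (w := 1 / 2) (by norm_num) using 3
  rw [betaDensity]
  norm_num

lemma lintegral_mul_betaDensity {b r : ℝ} (hb : 0 < b) (hr : r ∈ Ioo (0 : ℝ) 1) :
    ∫⁻ t in Ioo 0 r, ENNReal.ofReal ((1 - r * t) ^ (-(1 / 2) : ℝ)) * betaDensity b r t =
      ∑' j : ℕ, ENNReal.ofReal (betaWeight b j * r ^ (b + 2 * j)) := by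
  have hseries : ∀ t ∈ Ioo 0 r,
      ENNReal.ofReal ((1 - r * t) ^ (-(1 / 2) : ℝ)) * betaDensity b r t =
        ∑' j : ℕ, ENNReal.ofReal (Ring.multichoose (1 / 2 : ℝ) j * r ^ j) *
          betaDensity (b + j) r t := by
    rintro t ⟨ht, htr⟩
    have hrt : r * t < 1 := by nlinarith [hr.1, hr.2]
    rw [← tsum_ofReal_multichoose_mul_pow (by norm_num) (mul_nonneg hr.1.le ht.le) hrt,
      ← ENNReal.tsum_mul_right]
    congr! 2 with j
    have := multichoose_pos (a := 1 / 2) (by norm_num) j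
    have := hr.1
    rw [betaDensity, betaDensity, ← ENNReal.ofReal_mul (by positivity),
      ← ENNReal.ofReal_mul (by positivity), add_sub_right_comm, rpow_add ht, rpow_natCast, mul_pow]
    ring_nf
  rw [setLIntegral_congr_fun measurableSet_Ioo hseries, lintegral_tsum fun j => by fun_prop]
  congr! 2 with j
  have := multichoose_pos (a := 1 / 2) (by norm_num) j
  have := hr.1
  rw [lintegral_const_mul _ (by fun_prop), lintegral_betaDensity hr.1
    (by positivity), ← ENNReal.ofReal_mul (by positivity), betaWeight,
    show b + 2 * j = b + j + (j : ℝ) by ring, rpow_add hr.1 (b + j), rpow_natCast]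
  ring_nf

/-- The kernel whose triple integral is the double series. -/
noncomputable def doubleSeriesKernel (b r T S : ℝ) : ENNReal :=
  ENNReal.ofReal ((1 + r) * r ^ (-(3 / 2) : ℝ)) *
    (ENNReal.ofReal ((1 - r * T) ^ (-(1 / 2) : ℝ)) * betaDensity b r T *
      (ENNReal.ofReal ((1 - r * S) ^ (-(1 / 2) : ℝ)) * betaDensity b r S))

/-- The kernel whose triple integral is the single series. -/
noncomputable def singleSeriesKernel (b v T S : ℝ) : ENNReal :=
  ENNReal.ofReal ((1 - v) ^ (-(1 / 2) : ℝ) * v ^ (-(3 / 2) : ℝ)) *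
    ENNReal.ofReal ((1 - T * S / v) ^ (-(1 / 2) : ℝ)) * (betaDensity b v T * betaDensity b v S)

lemma lintegral_lintegral_doubleSeriesKernel {b r : ℝ} (hb : 0 < b) (hr : r ∈ Ioo (0 : ℝ) 1) :
    ∫⁻ T in Ioo 0 r, ∫⁻ S in Ioo 0 r, doubleSeriesKernel b r T S =
      ∑' j : ℕ, ∑' k : ℕ, ENNReal.ofReal (betaWeight b j * betaWeight b k) *
        ENNReal.ofReal (r ^ (2 * b + 2 * j + 2 * k) * ((1 + r) * r ^ (-(3 / 2) : ℝ))) := by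
  unfold doubleSeriesKernel
  simp_rw [lintegral_const_mul' _ _ ENNReal.ofReal_ne_top]
  rw [lintegral_lintegral_mul (by fun_prop) (by fun_prop),
    lintegral_mul_betaDensity hb hr, ← ENNReal.tsum_mul_right, ← ENNReal.tsum_mul_left]
  congr! 2 with j
  rw [← ENNReal.tsum_mul_left, ← ENNReal.tsum_mul_left]
  congr! 2 with k
  have := betaWeight_pos hb j
  have := betaWeight_pos hb k
  have := hr.1
  rw [← ENNReal.ofReal_mul (by positivity), ← ENNReal.ofReal_mul (by positivity),
    ← ENNReal.ofReal_mul (by positivity),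
    show 2 * b + 2 * j + 2 * k = b + 2 * j + (b + 2 * k) by ring, rpow_add hr.1 (b + 2 * j)]
  ring_nf

lemma lintegral_doubleSeriesKernel {b : ℝ} (hb : 1 / 4 < b) :
    ∫⁻ r in Ioo (0 : ℝ) 1, ∫⁻ T in Ioo 0 r, ∫⁻ S in Ioo 0 r, doubleSeriesKernel b r T S =
      ∑' j : ℕ, ∑' k : ℕ, ENNReal.ofReal
        (betaWeight b j * betaWeight b k * reciprocalPair (2 * b + 2 * j + 2 * k)) := by
  have hb₀ : 0 < b := by linarith
  rw [setLIntegral_congr_fun measurableSet_Ioo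
      fun r hr => lintegral_lintegral_doubleSeriesKernel hb₀ hr,
    lintegral_tsum fun j => (Measurable.tsum fun k => by fun_prop).aemeasurable]
  congr! 2 with j
  rw [lintegral_tsum fun k => by fun_prop]
  congr! 2 with k
  have hexp : 1 / 2 < 2 * b + 2 * j + 2 * k := by
    linarith
  rw [lintegral_const_mul _ (by fun_prop), lintegral_rpow_mul_one_add_mul_rpow hexp,
    ENNReal.ofReal_mul (mul_pos (betaWeight_pos hb₀ j) (betaWeight_pos hb₀ k)).le]

lemma singleSeriesKernel_eq_tsum {b v T S : ℝ} (hv : v ∈ Ioo (0 : ℝ) 1) (hT : T ∈ Ioo 0 v)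
    (hS : S ∈ Ioo 0 v) :
    singleSeriesKernel b v T S = ∑' n : ℕ, ENNReal.ofReal
      (Ring.multichoose (1 / 2 : ℝ) n * v ^ (-(n : ℝ) - 3 / 2) * (1 - v) ^ (-(1 / 2) : ℝ)) *
        (betaDensity (b + n) v T * betaDensity (b + n) v S) := by
  obtain ⟨hv₀, hv₁⟩ := hv
  obtain ⟨hT₀, hTv⟩ := hT
  obtain ⟨hS₀, hSv⟩ := hS
  have hTv' : 0 < 1 - T / v := sub_pos.2 ((div_lt_one hv₀).2 hTv)
  have hTS : T * S / v < 1 := by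
    rw [div_lt_one hv₀]
    nlinarith
  rw [singleSeriesKernel, ← tsum_ofReal_multichoose_mul_pow (y := T * S / v) (by norm_num)
    (by positivity) hTS, ← ENNReal.tsum_mul_left, ← ENNReal.tsum_mul_right]
  congr! 2 with n
  have := multichoose_pos (a := 1 / 2) (by norm_num) n
  unfold betaDensity
  rw [← ENNReal.ofReal_mul (by positivity), ← ENNReal.ofReal_mul (by positivity),
    ← ENNReal.ofReal_mul (by positivity), ← ENNReal.ofReal_mul (by positivity),
    ← ENNReal.ofReal_mul (by positivity), add_sub_right_comm, rpow_add hT₀, rpow_add hS₀,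
    show -(n : ℝ) - 3 / 2 = -(3 / 2) - n by ring, rpow_sub hv₀, rpow_natCast, rpow_natCast,
    rpow_natCast, div_pow, mul_pow]
  ring_nf

lemma lintegral_lintegral_singleSeriesKernel {b v : ℝ} (hb : 0 < b) (hv : v ∈ Ioo (0 : ℝ) 1) :
    ∫⁻ T in Ioo 0 v, ∫⁻ S in Ioo 0 v, singleSeriesKernel b v T S =
      ∑' n : ℕ, ENNReal.ofReal (Ring.multichoose (1 / 2 : ℝ) n * beta (b + n) (1 / 2) ^ 2) *
        ENNReal.ofReal (v ^ (2 * b + n - 1 / 2 - 1) * (1 - v) ^ ((1 / 2 : ℝ) - 1)) := by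
  have hinner : ∀ T ∈ Ioo 0 v, ∫⁻ S in Ioo 0 v, singleSeriesKernel b v T S =
      ∑' n : ℕ, ENNReal.ofReal
        (Ring.multichoose (1 / 2 : ℝ) n * v ^ (-(n : ℝ) - 3 / 2) * (1 - v) ^ (-(1 / 2) : ℝ)) *
          ∫⁻ S in Ioo 0 v, betaDensity (b + n) v T * betaDensity (b + n) v S := by
    intro T hT
    rw [setLIntegral_congr_fun measurableSet_Ioo fun S hS => singleSeriesKernel_eq_tsum hv hT hS,
      lintegral_tsum fun n => by fun_prop]
    simp_rw [lintegral_const_mul' _ _ ENNReal.ofReal_ne_top]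
  rw [setLIntegral_congr_fun measurableSet_Ioo hinner, lintegral_tsum fun n => by
    simp_rw [lintegral_const_mul _ (measurable_betaDensity _ _)]; fun_prop]
  congr! 2 with n
  have := multichoose_pos (a := 1 / 2) (by norm_num) n
  have := beta_pos (show 0 < b + n by positivity) (show (0 : ℝ) < 1 / 2 by norm_num)
  have := hv.1
  have : 0 < 1 - v := sub_pos.2 hv.2
  rw [lintegral_const_mul' _ _ ENNReal.ofReal_ne_top,
    lintegral_lintegral_mul (by fun_prop) (by fun_prop),
    lintegral_betaDensity hv.1 (by positivity), ← ENNReal.ofReal_mul (by positivity),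
    ← ENNReal.ofReal_mul (by positivity), ← ENNReal.ofReal_mul (by positivity),
    show 2 * b + n - 1 / 2 - 1 = b + n + (b + n) + (-(n : ℝ) - 3 / 2) by ring,
    rpow_add hv.1 (b + n + (b + n)), rpow_add hv.1 (b + n)]
  ring_nf

lemma lintegral_singleSeriesKernel {b : ℝ} (hb : 1 / 4 < b) :
    ∫⁻ v in Ioo (0 : ℝ) 1, ∫⁻ T in Ioo 0 v, ∫⁻ S in Ioo 0 v, singleSeriesKernel b v T S =
      ∑' n : ℕ, ENNReal.ofReal (tripleBetaTerm b n) := by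
  have hb₀ : 0 < b := by linarith
  rw [setLIntegral_congr_fun measurableSet_Ioo
      fun v hv => lintegral_lintegral_singleSeriesKernel hb₀ hv,
    lintegral_tsum fun n => by fun_prop]
  congr! 2 with n
  have hpos : 0 < 2 * b + n - 1 / 2 := by
    linarith
  have := multichoose_pos (a := 1 / 2) (by norm_num) n
  rw [lintegral_const_mul _ (by fun_prop), lintegral_rpow_mul_one_sub_rpow hpos (by norm_num),
    ← ENNReal.ofReal_mul (by positivity), tripleBetaTerm]

lemma doubleSeriesKernel_comm (b r T S : ℝ) :
    doubleSeriesKernel b r T S = doubleSeriesKernel b r S T := by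
  rw [doubleSeriesKernel, doubleSeriesKernel,
    mul_comm (_ * betaDensity b r T) (_ * betaDensity b r S)]

lemma singleSeriesKernel_comm (b v T S : ℝ) :
    singleSeriesKernel b v T S = singleSeriesKernel b v S T := by
  rw [singleSeriesKernel, singleSeriesKernel, mul_comm T, mul_comm (betaDensity b v T)]

lemma doubleSeriesKernel_eq {b r S T : ℝ} (hS : 0 < S) (hT : 0 < T) (hSr : S < r) (hTr : T < r)
    (hr : r < 1) :
    doubleSeriesKernel b r T S = ENNReal.ofReal (T ^ (b - 1) * S ^ (b - 1)) *
      ENNReal.ofReal ((1 + r) *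
        (r * (r - T) * (r - S) * (1 - r * T) * (1 - r * S)) ^ (-(1 / 2) : ℝ)) := by
  have hr₀ : 0 < r := hT.trans hTr
  have hrT : 0 < 1 - r * T := by nlinarith
  have hrS : 0 < 1 - r * S := by nlinarith
  have hTdiv : 0 < 1 - T / r := sub_pos.2 ((div_lt_one hr₀).2 hTr)
  have hSdiv : 0 < 1 - S / r := sub_pos.2 ((div_lt_one hr₀).2 hSr)
  have hfactor : r * (r - T) * (r - S) * (1 - r * T) * (1 - r * S) =
      (1 - r * T) * (1 - T / r) * (1 - r * S) * (1 - S / r) * r ^ 3 := by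
    field_simp
  simp only [doubleSeriesKernel, betaDensity]
  rw [← ENNReal.ofReal_mul (by positivity), ← ENNReal.ofReal_mul (by positivity),
    ← ENNReal.ofReal_mul (by positivity), ← ENNReal.ofReal_mul (by positivity),
    ← ENNReal.ofReal_mul (by positivity), hfactor, mul_rpow (by positivity) (by positivity),
    mul_rpow (by positivity) (by positivity), mul_rpow (by positivity) (by positivity),
    mul_rpow (by positivity) (by positivity), rpow_neg_half_cube hr₀]
  ring_nf

lemma singleSeriesKernel_eq {b v S T : ℝ} (hS : 0 < S) (hT : 0 < T) (hSv : S < v) (hTv : T < v)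
    (hv : v < 1) :
    singleSeriesKernel b v T S = ENNReal.ofReal (T ^ (b - 1) * S ^ (b - 1)) *
      ENNReal.ofReal (((v - T) * (v - S) * (v - T * S) * (1 - v)) ^ (-(1 / 2) : ℝ)) := by
  have hv₀ : 0 < v := hT.trans hTv
  have hv₁ : 0 < 1 - v := sub_pos.2 hv
  have hTSdiv : 0 < 1 - T * S / v := by
    rw [sub_pos, div_lt_one hv₀]
    nlinarith
  have hTdiv : 0 < 1 - T / v := sub_pos.2 ((div_lt_one hv₀).2 hTv)
  have hSdiv : 0 < 1 - S / v := sub_pos.2 ((div_lt_one hv₀).2 hSv)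
  have hfactor : (v - T) * (v - S) * (v - T * S) * (1 - v) =
      (1 - T / v) * (1 - S / v) * (1 - T * S / v) * (1 - v) * v ^ 3 := by
    field_simp
  simp only [singleSeriesKernel, betaDensity]
  rw [← ENNReal.ofReal_mul (by positivity), ← ENNReal.ofReal_mul (by positivity),
    ← ENNReal.ofReal_mul (by positivity), ← ENNReal.ofReal_mul (by positivity), hfactor,
    mul_rpow (by positivity) (by positivity), mul_rpow (by positivity) (by positivity),
    mul_rpow (by positivity) (by positivity), mul_rpow (by positivity) (by positivity),
    rpow_neg_half_cube hv₀]
  ring_nf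

lemma lintegral_doubleSeriesKernel_eq_lintegral_singleSeriesKernel (b : ℝ) {S T : ℝ} (hS : 0 < S)
    (hST : S ≤ T) (hT : T < 1) :
    ∫⁻ r in Ioo T 1, doubleSeriesKernel b r T S = ∫⁻ v in Ioo T 1, singleSeriesKernel b v T S := by
  have hT₀ : 0 < T := hS.trans_le hST
  rw [setLIntegral_congr_fun measurableSet_Ioo fun r hr =>
      doubleSeriesKernel_eq hS hT₀ (hST.trans_lt hr.1) hr.1 hr.2,
    setLIntegral_congr_fun measurableSet_Ioo fun v hv =>
      singleSeriesKernel_eq hS hT₀ (hST.trans_lt hv.1) hv.1 hv.2,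
    lintegral_const_mul _ (by fun_prop), lintegral_const_mul _ (by fun_prop),
    ← lintegral_ellipticDensity_eq_palindromic hS hST hT,
    lintegral_ellipticDensity_eq_quartic hS hST hT]

theorem tsum_tsum_betaWeight_mul_reciprocalPair {b : ℝ} (hb : 1 / 4 < b) :
    ∑' j : ℕ, ∑' k : ℕ, ENNReal.ofReal
        (betaWeight b j * betaWeight b k * reciprocalPair (2 * b + 2 * j + 2 * k)) =
      ∑' n : ℕ, ENNReal.ofReal (tripleBetaTerm b n) := by
  rw [← lintegral_doubleSeriesKernel hb, ← lintegral_singleSeriesKernel hb,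
    lintegral_Ioo_lintegral_Ioo_lintegral_Ioo_swap
      (by unfold doubleSeriesKernel betaDensity; fun_prop),
    lintegral_Ioo_lintegral_Ioo_lintegral_Ioo_swap
      (by unfold singleSeriesKernel betaDensity; fun_prop)]
  refine setLIntegral_congr_fun measurableSet_Ioo fun T hT =>
    setLIntegral_congr_fun measurableSet_Ioo fun S hS => ?_
  rcases le_total S T with hST | hTS
  · rw [max_eq_left hST,
      lintegral_doubleSeriesKernel_eq_lintegral_singleSeriesKernel b hS.1 hST hT.2]
  · simp_rw [doubleSeriesKernel_comm b _ T, singleSeriesKernel_comm b _ T]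
    rw [max_eq_right hTS,
      lintegral_doubleSeriesKernel_eq_lintegral_singleSeriesKernel b hT.1 hTS hS.2]

end DoubleSum

section Legendre

/-- The coefficient `(b)ₙ (1 - b)ₙ / n!²` of the Legendre function `₂F₁(b, 1 - b; 1 | x)`. -/
noncomputable def legendreCoeff (b : ℝ) (n : ℕ) : ℝ :=
  Ring.multichoose b n * Ring.multichoose (1 - b) n

lemma legendreCoeff_zero (b : ℝ) : legendreCoeff b 0 = 1 := by
  simp [legendreCoeff]

lemma legendreCoeff_succ_mul (b : ℝ) (n : ℕ) :
    legendreCoeff b (n + 1) * (n + 1) ^ 2 = legendreCoeff b n * ((n + b) * (n + 1 - b)) := by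
  rw [legendreCoeff, legendreCoeff]
  linear_combination Ring.multichoose (1 - b) (n + 1) * (n + 1) * multichoose_succ_mul b n +
    Ring.multichoose b n * (b + n) * multichoose_succ_mul (1 - b) n

lemma ris_one (n : ℕ) : ris 1 n = n.factorial := by
  rw [← ascPochhammer_eval_eq_ris, ascPochhammer_eval_one]

lemma pFq_eq_tsum_legendreCoeff (b x : ℝ) :
    pFq [b, 1 - b] [1] x = ∑' n, legendreCoeff b n * x ^ n := by
  refine tsum_congr fun n => ?_
  simp only [List.map_cons, List.map_nil, List.prod_cons, List.prod_nil, mul_one, ris_one,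
    legendreCoeff, multichoose_eq_ris_div_factorial]
  ring

variable {b : ℝ}

lemma legendreCoeff_pos (hb₀ : 0 < b) (hb₁ : b < 1) (n : ℕ) : 0 < legendreCoeff b n :=
  mul_pos (multichoose_pos hb₀ n) (multichoose_pos (sub_pos.2 hb₁) n)

lemma legendreCoeff_le (hb₀ : 0 < b) (hb₁ : b < 1) (n : ℕ) :
    legendreCoeff b n ≤ 1 / (n + 1) := by
  induction n with
  | zero => simp [legendreCoeff_zero]
  | succ n ih =>
    have hb : b * (1 - b) ≤ 1 / 4 := by nlinarith [sq_nonneg (b - 1 / 2)]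
    have hratio : (n + b) * (n + 1 - b) * (n + 2) ≤ ((n : ℝ) + 1) ^ 3 := by
      nlinarith [mul_nonneg (n.cast_nonneg (α := ℝ)) (sub_nonneg.2 hb)]
    have hpos : (0 : ℝ) ≤ (n + b) * (n + 1 - b) := mul_nonneg (by positivity) (by linarith)
    rw [← mul_le_mul_iff_left₀ (show (0 : ℝ) < (n + 1) ^ 2 by positivity), legendreCoeff_succ_mul]
    calc legendreCoeff b n * ((n + b) * (n + 1 - b))
        ≤ 1 / (n + 1) * ((n + b) * (n + 1 - b)) := by gcongr
      _ ≤ 1 / ((n + 1 : ℕ) + 1) * (n + 1) ^ 2 := by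
        push_cast
        rw [div_mul_eq_mul_div, div_mul_eq_mul_div, div_le_div_iff₀ (by positivity) (by positivity)]
        linarith

lemma summable_legendreCoeff_mul_pow (hb₀ : 0 < b) (hb₁ : b < 1) {x : ℝ} (hx₀ : 0 ≤ x)
    (hx₁ : x < 1) : Summable fun n => legendreCoeff b n * x ^ n := by
  refine (summable_geometric_of_lt_one hx₀ hx₁).of_nonneg_of_le
    (fun n => mul_nonneg (legendreCoeff_pos hb₀ hb₁ n).le (by positivity)) fun n => ?_
  refine mul_le_of_le_one_left (by positivity) ((legendreCoeff_le hb₀ hb₁ n).trans ?_)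
  exact div_le_one_of_le₀ (by linarith [n.cast_nonneg (α := ℝ)]) (by positivity)

lemma pFq_le_one_sub_log (hb₀ : 0 < b) (hb₁ : b < 1) {x : ℝ} (hx₀ : 0 ≤ x) (hx₁ : x < 1) :
    pFq [b, 1 - b] [1] x ≤ 1 - log (1 - x) := by
  have hsum := summable_legendreCoeff_mul_pow hb₀ hb₁ hx₀ hx₁
  have hlog := hasSum_pow_div_log_of_abs_lt_one (x := x) (by rwa [abs_of_nonneg hx₀])
  rw [pFq_eq_tsum_legendreCoeff, hsum.tsum_eq_zero_add, legendreCoeff_zero, sub_eq_add_neg,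
    ← hlog.tsum_eq, pow_zero, mul_one]
  gcongr with n
  · exact (summable_nat_add_iff 1).2 hsum
  · exact hlog.summable
  · rw [mul_comm, div_eq_mul_one_div (x ^ (n + 1))]
    gcongr
    refine (legendreCoeff_le hb₀ hb₁ (n + 1)).trans ?_
    push_cast
    gcongr
    linarith

/-- The Legendre function `P₋ᵦ(-cos t) = ₂F₁(b, 1 - b; 1 | cos² (t / 2))`, with a logarithmic
singularity at `t = 0`. -/
noncomputable def legendreAngle (b t : ℝ) : ℝ := pFq [b, 1 - b] [1] (cos (t / 2) ^ 2)

lemma legendreAngle_one_sub (b : ℝ) : legendreAngle (1 - b) = legendreAngle b := by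
  ext t
  rw [legendreAngle, sub_sub_cancel, pFq_perm (List.Perm.swap b (1 - b) []) (List.Perm.refl _),
    legendreAngle]

lemma legendreAngle_eq_tsum (b t : ℝ) :
    legendreAngle b t = ∑' n, legendreCoeff b n * cos (t / 2) ^ (2 * n) := by
  simp_rw [legendreAngle, pFq_eq_tsum_legendreCoeff, pow_mul]

lemma measurable_legendreAngle (b : ℝ) : Measurable (legendreAngle b) := by
  simp_rw [funext (legendreAngle_eq_tsum b)]
  exact Measurable.tsum fun n => by fun_prop

lemma legendreAngle_nonneg (hb₀ : 0 < b) (hb₁ : b < 1) (t : ℝ) : 0 ≤ legendreAngle b t := by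
  rw [legendreAngle_eq_tsum]
  exact tsum_nonneg fun n => mul_nonneg (legendreCoeff_pos hb₀ hb₁ n).le
    ((even_two_mul n).pow_nonneg _)

lemma div_pi_sq_le_one_sub_cos_sq {t : ℝ} (ht : t ∈ Ioc 0 π) :
    (t / π) ^ 2 ≤ 1 - cos (t / 2) ^ 2 := by
  have hsin : t / π ≤ sin (t / 2) := by
    convert mul_le_sin (x := t / 2) (by linarith [ht.1]) (by linarith [ht.2]) using 1
    ring
  rw [← sin_sq]
  exact pow_le_pow_left₀ (div_nonneg ht.1.le pi_pos.le) hsin 2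

lemma cos_half_sq_lt_one {t : ℝ} (ht : t ∈ Ioc 0 π) : cos (t / 2) ^ 2 < 1 := by
  have hpos : 0 < (t / π) ^ 2 := pow_pos (div_pos ht.1 pi_pos) 2
  linarith [div_pi_sq_le_one_sub_cos_sq ht]

lemma legendreAngle_le (hb₀ : 0 < b) (hb₁ : b < 1) {t : ℝ} (ht : t ∈ Ioc 0 π) :
    legendreAngle b t ≤ 8 * (t / π) ^ (-(1 / 4) : ℝ) := by
  have ht₀ : 0 < t / π := div_pos ht.1 pi_pos
  have hlog : 2 * log (t / π) ≤ log (1 - cos (t / 2) ^ 2) := by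
    have h := log_le_log (by positivity) (div_pi_sq_le_one_sub_cos_sq ht)
    rwa [log_pow, Nat.cast_ofNat] at h
  have hrpow := log_le_sub_one_of_pos (rpow_pos_of_pos ht₀ (-(1 / 4)))
  rw [log_rpow ht₀] at hrpow
  have hF := pFq_le_one_sub_log hb₀ hb₁ (sq_nonneg _) (cos_half_sq_lt_one ht)
  rw [legendreAngle]
  linarith

lemma memLp_legendreAngle (hb₀ : 0 < b) (hb₁ : b < 1) :
    MemLp (legendreAngle b) 2 (volume.restrict (Ioc 0 π)) := by
  rw [memLp_two_iff_integrable_sq (measurable_legendreAngle b).aestronglyMeasurable]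
  have hrpow : IntegrableOn (fun t : ℝ => 64 * π ^ (1 / 2 : ℝ) * t ^ (-(1 / 2) : ℝ)) (Ioc 0 π) := by
    rw [← intervalIntegrable_iff_integrableOn_Ioc_of_le pi_pos.le]
    exact (intervalIntegral.intervalIntegrable_rpow' (by norm_num)).const_mul _
  refine hrpow.mono' ((measurable_legendreAngle b).pow_const 2).aestronglyMeasurable ?_
  filter_upwards [ae_restrict_mem measurableSet_Ioc] with t ht
  have ht₀ : 0 ≤ t / π := div_nonneg ht.1.le pi_pos.le
  rw [norm_of_nonneg (by positivity)]
  calc legendreAngle b t ^ 2 ≤ (8 * (t / π) ^ (-(1 / 4) : ℝ)) ^ 2 :=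
        pow_le_pow_left₀ (legendreAngle_nonneg hb₀ hb₁ t) (legendreAngle_le hb₀ hb₁ ht) 2
    _ = 64 * (t / π) ^ (-(1 / 2) : ℝ) := by
        rw [mul_pow, ← rpow_mul_natCast ht₀]
        norm_num
    _ = 64 * π ^ (1 / 2 : ℝ) * t ^ (-(1 / 2) : ℝ) := by
        rw [div_rpow ht.1.le pi_pos.le, rpow_neg pi_pos.le]
        field_simp

lemma intervalIntegrable_legendreAngle (hb₀ : 0 < b) (hb₁ : b < 1) :
    IntervalIntegrable (legendreAngle b) volume 0 π := by
  rw [intervalIntegrable_iff_integrableOn_Ioc_of_le pi_pos.le]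
  exact (memLp_legendreAngle hb₀ hb₁).integrable (by norm_num)

end Legendre

section CosineMoments

/-- The cosine transform at frequency `l` of `cos (t / 2) ^ (2 * n)` on `[0, π]`. -/
noncomputable def cosPowMoment (n : ℕ) (l : ℝ) : ℝ :=
  ∫ t in (0 : ℝ)..π, cos (t / 2) ^ (2 * n) * cos (l * t)

/-- The sine transform at frequency `l` of `sin t * cos (t / 2) ^ (2 * n)` on `[0, π]`. -/
noncomputable def sinCosPowMoment (n : ℕ) (l : ℝ) : ℝ :=
  ∫ t in (0 : ℝ)..π, sin t * cos (t / 2) ^ (2 * n) * sin (l * t)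

lemma hasDerivAt_cos_half (t : ℝ) : HasDerivAt (fun t => cos (t / 2)) (-sin (t / 2) / 2) t := by
  simpa [← div_eq_mul_inv, neg_div] using ((hasDerivAt_id t).div_const 2).cos

lemma hasDerivAt_sin_mul (l t : ℝ) : HasDerivAt (fun t => sin (l * t)) (l * cos (l * t)) t := by
  simpa [mul_comm] using ((hasDerivAt_id t).const_mul l).sin

lemma hasDerivAt_cos_mul (l t : ℝ) : HasDerivAt (fun t => cos (l * t)) (-(l * sin (l * t))) t := by
  simpa [mul_comm] using ((hasDerivAt_id t).const_mul l).cos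

lemma sin_eq_two_mul_sin_half_mul_cos_half (t : ℝ) : sin t = 2 * sin (t / 2) * cos (t / 2) := by
  rw [← sin_two_mul, mul_div_cancel₀ t two_ne_zero]

lemma cos_eq_two_mul_cos_half_sq_sub_one (t : ℝ) : cos t = 2 * cos (t / 2) ^ 2 - 1 := by
  rw [← cos_two_mul, mul_div_cancel₀ t two_ne_zero]

lemma add_one_mul_sinCosPowMoment (n : ℕ) (l : ℝ) :
    (n + 1) * sinCosPowMoment n l = 2 * l * cosPowMoment (n + 1) l := by
  have hFTC := intervalIntegral.integral_eq_sub_of_hasDerivAt (a := 0) (b := π)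
    (f := fun t => 2 * (cos (t / 2) ^ (2 * n + 2) * sin (l * t)))
    (f' := fun t => 2 * l * (cos (t / 2) ^ (2 * (n + 1)) * cos (l * t)) -
      (n + 1) * (sin t * cos (t / 2) ^ (2 * n) * sin (l * t)))
    (fun t _ => by
      refine ((((hasDerivAt_cos_half t).pow (2 * n + 2)).mul
        (hasDerivAt_sin_mul l t)).const_mul 2).congr_deriv ?_
      simp only [Pi.pow_apply, sin_eq_two_mul_sin_half_mul_cos_half t]
      push_cast
      ring)
    (Continuous.intervalIntegrable (by fun_prop) _ _)
  rw [intervalIntegral.integral_sub (Continuous.intervalIntegrable (by fun_prop) _ _)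
      (Continuous.intervalIntegrable (by fun_prop) _ _), intervalIntegral.integral_const_mul,
    intervalIntegral.integral_const_mul, ← cosPowMoment, ← sinCosPowMoment] at hFTC
  simp only [cos_pi_div_two, mul_zero, sin_zero, sub_zero] at hFTC
  linear_combination -hFTC

lemma mul_sinCosPowMoment (n : ℕ) (l : ℝ) :
    l * sinCosPowMoment n l =
      (2 * n + 2) * cosPowMoment (n + 1) l - (2 * n + 1) * cosPowMoment n l := by
  have hFTC := intervalIntegral.integral_eq_sub_of_hasDerivAt (a := 0) (b := π)
    (f := fun t => -(sin t * cos (t / 2) ^ (2 * n) * cos (l * t)))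
    (f' := fun t => l * (sin t * cos (t / 2) ^ (2 * n) * sin (l * t)) -
      ((2 * n + 2) * (cos (t / 2) ^ (2 * (n + 1)) * cos (l * t)) -
        (2 * n + 1) * (cos (t / 2) ^ (2 * n) * cos (l * t))))
    (fun t _ => by
      have hcos : cos t * cos (t / 2) ^ (2 * n) + sin t * ((2 * n : ℕ) *
          cos (t / 2) ^ (2 * n - 1) * (-sin (t / 2) / 2)) =
          (2 * n + 2) * cos (t / 2) ^ (2 * (n + 1)) - (2 * n + 1) * cos (t / 2) ^ (2 * n) := by
        rw [sin_eq_two_mul_sin_half_mul_cos_half t, cos_eq_two_mul_cos_half_sq_sub_one t]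
        rcases n with _ | n
        · simp
        · have hsq := sin_sq (t / 2)
          rw [show 2 * (n + 1) - 1 = 2 * n + 1 by omega]
          push_cast
          linear_combination (-2 * (n + 1) * cos (t / 2) ^ (2 * n + 2)) * hsq
      refine ((((hasDerivAt_sin t).mul ((hasDerivAt_cos_half t).pow (2 * n))).mul
        (hasDerivAt_cos_mul l t)).neg).congr_deriv ?_
      simp only [Pi.pow_apply, Pi.mul_apply]
      linear_combination (-cos (l * t)) * hcos)
    (Continuous.intervalIntegrable (by fun_prop) _ _)
  rw [intervalIntegral.integral_sub (Continuous.intervalIntegrable (by fun_prop) _ _)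
      (Continuous.intervalIntegrable (by fun_prop) _ _),
    intervalIntegral.integral_sub (Continuous.intervalIntegrable (by fun_prop) _ _)
      (Continuous.intervalIntegrable (by fun_prop) _ _), intervalIntegral.integral_const_mul,
    intervalIntegral.integral_const_mul, intervalIntegral.integral_const_mul, ← cosPowMoment,
    ← cosPowMoment, ← sinCosPowMoment] at hFTC
  simp only [sin_pi, zero_mul, sin_zero, sub_self] at hFTC
  linear_combination hFTC

lemma sinCosPowMoment_eq (n : ℕ) (l : ℝ) :
    sinCosPowMoment n l = (cosPowMoment n (l - 1) - cosPowMoment n (l + 1)) / 2 := by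
  simp only [cosPowMoment]
  rw [← intervalIntegral.integral_sub (Continuous.intervalIntegrable (by fun_prop) _ _)
    (Continuous.intervalIntegrable (by fun_prop) _ _), ← intervalIntegral.integral_div]
  refine intervalIntegral.integral_congr fun t _ => ?_
  simp only [sub_mul, add_mul, one_mul, cos_sub, cos_add]
  ring

lemma cosPowMoment_succ (n : ℕ) (l : ℝ) :
    cosPowMoment (n + 1) l =
      (2 * cosPowMoment n l + cosPowMoment n (l - 1) + cosPowMoment n (l + 1)) / 4 := by
  simp only [cosPowMoment]
  rw [← intervalIntegral.integral_const_mul,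
    ← intervalIntegral.integral_add (Continuous.intervalIntegrable (by fun_prop) _ _)
      (Continuous.intervalIntegrable (by fun_prop) _ _),
    ← intervalIntegral.integral_add (Continuous.intervalIntegrable (by fun_prop) _ _)
      (Continuous.intervalIntegrable (by fun_prop) _ _), ← intervalIntegral.integral_div]
  refine intervalIntegral.integral_congr fun t _ => ?_
  simp only [sub_mul, add_mul, one_mul, cos_sub, cos_add, cos_eq_two_mul_cos_half_sq_sub_one t]
  ring

lemma sq_sub_sq_mul_cosPowMoment_succ (n : ℕ) (l : ℝ) :
    ((n + 1) ^ 2 - l ^ 2) * cosPowMoment (n + 1) l = (n + 1) * (n + 1 / 2) * cosPowMoment n l := by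
  linear_combination l / 2 * add_one_mul_sinCosPowMoment n l -
    (n + 1) / 2 * mul_sinCosPowMoment n l

lemma mul_cosPowMoment_zero (l : ℝ) : l * cosPowMoment 0 l = sin (π * l) := by
  simp [cosPowMoment, mul_comm]

lemma tendsto_cosPowMoment (l : ℝ) :
    Filter.Tendsto (fun n => cosPowMoment n l) Filter.atTop (nhds 0) := by
  have hbound (n : ℕ) (t : ℝ) : ‖cos (t / 2) ^ (2 * n) * cos (l * t)‖ ≤ 1 := by
    rw [norm_mul, norm_pow]
    exact mul_le_one₀ (pow_le_one₀ (norm_nonneg _) (abs_cos_le_one _)) (norm_nonneg _)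
      (abs_cos_le_one _)
  have hlim : ∀ t ∈ Ioc 0 π, Filter.Tendsto (fun n => cos (t / 2) ^ (2 * n) * cos (l * t))
      Filter.atTop (nhds 0) := fun t ht => by
    simpa only [pow_mul, zero_mul] using (tendsto_pow_atTop_nhds_zero_of_lt_one (sq_nonneg _)
      (cos_half_sq_lt_one ht)).mul_const (cos (l * t))
  simpa [cosPowMoment] using
    intervalIntegral.tendsto_integral_filter_of_dominated_convergence (μ := volume) (a := 0)
      (b := π) (f := fun _ => 0) (fun _ => 1)
      (.of_forall fun n => Continuous.aestronglyMeasurable (by fun_prop))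
      (.of_forall fun n => .of_forall fun t _ => hbound n t) (by simp)
      (.of_forall fun t ht => hlim t (uIoc_of_le pi_pos.le ▸ ht))

end CosineMoments

section LegendreMoments

open ProbabilityTheory

/-- The cosine transform of the Legendre function `legendreAngle b` on `[0, π]`. -/
noncomputable def legendreMoment (b l : ℝ) : ℝ :=
  ∫ t in (0 : ℝ)..π, legendreAngle b t * cos (l * t)

variable {b : ℝ}

lemma hasSum_legendreCoeff_mul_cosPowMoment (hb₀ : 0 < b) (hb₁ : b < 1) (l : ℝ) :
    HasSum (fun n => legendreCoeff b n * cosPowMoment n l) (legendreMoment b l) := by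
  have hsum : ∀ t ∈ Ioc 0 π, Summable fun n => legendreCoeff b n * (cos (t / 2) ^ 2) ^ n :=
    fun t ht => summable_legendreCoeff_mul_pow hb₀ hb₁ (sq_nonneg _) (cos_half_sq_lt_one ht)
  have hbound (n : ℕ) (t : ℝ) : ‖legendreCoeff b n * (cos (t / 2) ^ (2 * n) * cos (l * t))‖ ≤
      legendreCoeff b n * (cos (t / 2) ^ 2) ^ n := by
    rw [norm_mul, norm_mul, norm_of_nonneg (legendreCoeff_pos hb₀ hb₁ n).le, pow_mul,
      norm_of_nonneg (by positivity)]
    have := (legendreCoeff_pos hb₀ hb₁ n).le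
    gcongr
    exact mul_le_of_le_one_right (by positivity) (abs_cos_le_one _)
  have hint : IntervalIntegrable (fun t => ∑' n, legendreCoeff b n * (cos (t / 2) ^ 2) ^ n)
      volume 0 π := by
    simpa only [← pow_mul, ← legendreAngle_eq_tsum] using intervalIntegrable_legendreAngle hb₀ hb₁
  have h := intervalIntegral.hasSum_integral_of_dominated_convergence (μ := volume) (a := 0)
    (b := π) (F := fun n t => legendreCoeff b n * (cos (t / 2) ^ (2 * n) * cos (l * t)))
    (f := fun t => legendreAngle b t * cos (l * t)) _
    (fun n => Continuous.aestronglyMeasurable (by fun_prop))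
    (fun n => .of_forall fun t _ => hbound n t)
    (.of_forall fun t ht => hsum t (uIoc_of_le pi_pos.le ▸ ht)) hint
    (.of_forall fun t ht => by
      have := (hsum t (uIoc_of_le pi_pos.le ▸ ht)).hasSum.mul_right (cos (l * t))
      simpa only [legendreAngle_eq_tsum, pow_mul, mul_assoc] using this)
  simp only [intervalIntegral.integral_const_mul] at h
  exact h

-- The series for the difference of the two sides telescopes.
lemma legendreMoment_recurrence (hb₀ : 0 < b) (hb₁ : b < 1) (u : ℝ) :
    (u - b) * (u + b - 1) * legendreMoment b (u - 1) =
      (u + b) * (u - b + 1) * legendreMoment b (u + 1) := by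
  set T : ℕ → ℝ := fun n => 4 * u * (n * legendreCoeff b n * cosPowMoment n u) with hT
  have hterm (n : ℕ) : -((u - b) * (u + b - 1)) * (legendreCoeff b n * cosPowMoment n (u - 1)) +
      (u + b) * (u - b + 1) * (legendreCoeff b n * cosPowMoment n (u + 1)) = T n - T (n + 1) := by
    simp only [hT]
    push_cast
    linear_combination 2 * (u ^ 2 + b * (1 - b)) * legendreCoeff b n * sinCosPowMoment_eq n u -
      4 * u * legendreCoeff b n * cosPowMoment_succ n u +
      (2 * n * legendreCoeff b n - 2 * (n + 1) * legendreCoeff b (n + 1)) *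
        add_one_mul_sinCosPowMoment n u -
      2 * u * legendreCoeff b n * mul_sinCosPowMoment n u +
      2 * sinCosPowMoment n u * legendreCoeff_succ_mul b n
  have hT_lim : Filter.Tendsto T Filter.atTop (nhds 0) := by
    have hlim := (tendsto_cosPowMoment u).norm.const_mul |4 * u|
    rw [norm_zero, mul_zero] at hlim
    refine squeeze_zero_norm (fun n => ?_) hlim
    have hcoeff : ‖n * legendreCoeff b n‖ ≤ 1 := by
      rw [norm_of_nonneg (mul_nonneg n.cast_nonneg (legendreCoeff_pos hb₀ hb₁ n).le)]
      have := (le_div_iff₀ (by positivity)).1 (legendreCoeff_le hb₀ hb₁ n)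
      linarith [legendreCoeff_pos hb₀ hb₁ n]
    rw [norm_mul (4 * u), norm_mul (n * legendreCoeff b n), norm_eq_abs (4 * u)]
    gcongr
    exact mul_le_of_le_one_left (norm_nonneg _) hcoeff
  have hsum := ((hasSum_legendreCoeff_mul_cosPowMoment hb₀ hb₁ (u - 1)).mul_left
    (-((u - b) * (u + b - 1)))).add
    ((hasSum_legendreCoeff_mul_cosPowMoment hb₀ hb₁ (u + 1)).mul_left ((u + b) * (u - b + 1)))
  simp_rw [hterm] at hsum
  have hpartial := hsum.tendsto_sum_nat
  simp_rw [Finset.sum_range_sub', show T 0 = 0 by simp [hT]] at hpartial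
  linarith [tendsto_nhds_unique hpartial (hT_lim.const_sub 0)]

lemma legendreCoeff_mul_cosPowMoment_self (hb₀ : 0 < b) (hb₁ : b < 1) (n : ℕ) :
    legendreCoeff b n * cosPowMoment n b =
      sin (π * b) * (Ring.multichoose (1 / 2 : ℝ) n / (b + n)) := by
  induction n with
  | zero =>
    rw [legendreCoeff_zero, ← mul_cosPowMoment_zero]
    simp only [one_mul, one_div, Ring.multichoose_zero_right', pow_zero, CharP.cast_eq_zero,
      add_zero]
    field_simp
  | succ n ih =>
    have hne : (n : ℝ) + 1 - b ≠ 0 := by linarith [n.cast_nonneg (α := ℝ)]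
    have ih' : legendreCoeff b n * cosPowMoment n b * (b + n) =
        sin (π * b) * Ring.multichoose (1 / 2 : ℝ) n := by
      rw [ih]
      field_simp
    have hmc := multichoose_succ_mul (1 / 2 : ℝ) n
    rw [← mul_div_assoc, eq_div_iff (by positivity)]
    refine mul_left_cancel₀ (mul_ne_zero hne (by positivity : ((n : ℝ) + 1) ^ 2 ≠ 0)) ?_
    push_cast
    linear_combination legendreCoeff b (n + 1) * (n + 1) ^ 2 *
        sq_sub_sq_mul_cosPowMoment_succ n b +
      (n + 1) * (n + 1 / 2) * cosPowMoment n b * legendreCoeff_succ_mul b n +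
      (n + 1 - b) * (n + 1) * (n + 1 / 2) * ih' -
      (n + 1 - b) * (n + 1) * sin (π * b) * hmc

lemma legendreMoment_self (hb₀ : 0 < b) (hb₁ : b < 1) :
    legendreMoment b b = sin (π * b) * beta b (1 / 2) := by
  have hsin : sin (π * b) ≠ 0 :=
    (sin_pos_of_pos_of_lt_pi (by positivity) (mul_lt_of_lt_one_right pi_pos hb₁)).ne'
  have hmoment := hasSum_legendreCoeff_mul_cosPowMoment hb₀ hb₁ b
  simp_rw [legendreCoeff_mul_cosPowMoment_self hb₀ hb₁] at hmoment
  have hsummable := (summable_mul_left_iff hsin).1 hmoment.summable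
  have hnonneg (n : ℕ) : 0 ≤ Ring.multichoose (1 / 2 : ℝ) n / (b + n) :=
    div_nonneg (multichoose_pos (by norm_num) n).le (by positivity)
  have hbeta := tsum_ofReal_multichoose_div (a := 1 / 2) (by norm_num) (by norm_num) hb₀
  rw [← ENNReal.ofReal_tsum_of_nonneg hnonneg hsummable, show (1 : ℝ) - 1 / 2 = 1 / 2 by norm_num,
    ENNReal.ofReal_eq_ofReal_iff (tsum_nonneg hnonneg) (beta_pos hb₀ (by norm_num)).le] at hbeta
  rw [← hmoment.tsum_eq, tsum_mul_left, hbeta]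

lemma legendreMoment_add_two_mul (hb₀ : 0 < b) (hb₁ : b < 1) (k : ℕ) :
    legendreMoment b (b + 2 * k) = sin (π * b) * betaWeight b k := by
  induction k with
  | zero => simp [legendreMoment_self hb₀ hb₁, betaWeight]
  | succ k ih =>
    have hrec := legendreMoment_recurrence hb₀ hb₁ (b + 2 * k + 1)
    have hmc := multichoose_succ_mul (1 / 2 : ℝ) k
    rw [add_sub_cancel_right, ih, betaWeight,
      show b + 2 * k + 1 + 1 = b + 2 * ((k + 1 : ℕ) : ℝ) by push_cast; ring] at hrec
    rw [betaWeight, show b + ((k + 1 : ℕ) : ℝ) = b + k + 1 by push_cast; ring,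
      beta_add_one (by positivity) (by norm_num), ← mul_div_assoc, ← mul_div_assoc,
      eq_div_iff (by positivity)]
    refine mul_left_cancel₀ (by positivity : (4 : ℝ) * (k + 1) ≠ 0) ?_
    linear_combination -hrec - 4 * sin (π * b) * beta (b + k) (1 / 2) * (b + k) * hmc

lemma legendreMoment_sub_two_mul (hb₀ : 0 < b) (hb₁ : b < 1) (k : ℕ) :
    legendreMoment b (b - 2 * (k + 1)) = 0 := by
  induction k with
  | zero =>
    have hrec := legendreMoment_recurrence hb₀ hb₁ (b - 1)
    rw [show b - 1 - 1 = b - 2 * ((0 : ℕ) + 1) by push_cast; ring, sub_add_cancel,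
      show b - 1 - b + 1 = 0 by ring, mul_zero, zero_mul] at hrec
    exact (mul_eq_zero.1 hrec).resolve_left (by nlinarith)
  | succ k ih =>
    have hrec := legendreMoment_recurrence hb₀ hb₁ (b - 2 * (k + 1) - 1)
    rw [sub_add_cancel _ (1 : ℝ), ih, mul_zero,
      show b - 2 * ((k : ℝ) + 1) - 1 - 1 = b - 2 * ((k + 1 : ℕ) + 1) by push_cast; ring] at hrec
    exact (mul_eq_zero.1 hrec).resolve_left (mul_ne_zero (by linarith) (by linarith))

end LegendreMoments

section Parseval

open scoped ComplexConjugate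

lemma hasSum_fourierCoeffOn_mul_conj {a b : ℝ} (hab : a < b) {f g : ℝ → ℂ}
    (hf : MemLp f 2 (volume.restrict (Ioc a b))) (hg : MemLp g 2 (volume.restrict (Ioc a b))) :
    HasSum (fun k => fourierCoeffOn hab f k * conj (fourierCoeffOn hab g k))
      ((b - a)⁻¹ • ∫ t in a..b, f t * conj (g t)) := by
  have := Fact.mk (sub_pos.2 hab)
  rw [← add_sub_cancel a b] at hf hg
  have hf' := hf.memLp_liftIoc.haarAddCircle
  have hg' := hg.memLp_liftIoc.haarAddCircle
  have hcoeff {u : ℝ → ℂ} (hu : MemLp (AddCircle.liftIoc (b - a) a u) 2 AddCircle.haarAddCircle)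
      (k : ℤ) : inner ℂ (fourierBasis k) hu.toLp = fourierCoeffOn hab u k := by
    rw [← HilbertBasis.repr_apply_apply, fourierBasis_repr, fourierCoeff_congr_ae hu.coeFn_toLp,
      fourierCoeff_liftIoc_eq]
    simp only [add_sub_cancel]
  have hinner : inner ℂ hg'.toLp hf'.toLp = (b - a)⁻¹ • ∫ t in a..b, f t * conj (g t) := by
    conv_rhs => rw [← add_sub_cancel a b, add_sub_cancel_left]
    rw [← AddCircle.integral_liftIoc_eq_intervalIntegral, ← AddCircle.integral_haarAddCircle,
      L2.inner_def]
    refine integral_congr_ae ?_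
    filter_upwards [hf'.coeFn_toLp, hg'.coeFn_toLp] with x hfx hgx
    rw [hfx, hgx, RCLike.inner_apply]
    rfl
  have h := (fourierBasis (T := b - a)).hasSum_inner_mul_inner hg'.toLp hf'.toLp
  simp_rw [hinner, ← inner_conj_symm hg'.toLp, hcoeff, mul_comm (conj _)] at h
  exact h

lemma fourierCoeffOn_zero_pi (f : ℝ → ℂ) (k : ℤ) :
    fourierCoeffOn pi_pos f k = π⁻¹ * ∫ t in (0 : ℝ)..π, Circle.exp (-(2 * k * t)) * f t := by
  rw [fourierCoeffOn_eq_integral, sub_zero, Complex.real_smul, one_div, Complex.ofReal_inv]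
  congr 1
  refine intervalIntegral.integral_congr fun t _ => ?_
  simp only [fourier_coe_apply, smul_eq_mul, Circle.coe_exp]
  congr 2
  have hπ : (π : ℂ) ≠ 0 := Complex.ofReal_ne_zero.2 pi_ne_zero
  push_cast
  field_simp

lemma memLp_circleExp_mul {p : ENNReal} {μ : Measure ℝ} {f : ℝ → ℂ} (hf : MemLp f p μ) (l : ℝ) :
    MemLp (fun t => Circle.exp (l * t) * f t) p μ :=
  hf.mul' (memLp_top_of_bound (Continuous.aestronglyMeasurable (by fun_prop)) 1
    (.of_forall fun t => (Circle.norm_coe _).le))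

lemma hasSum_integral_circleExp_mul_integral_circleExp {f g : ℝ → ℂ} (c : ℝ)
    (hf : MemLp f 2 (volume.restrict (Ioc 0 π))) (hg : MemLp g 2 (volume.restrict (Ioc 0 π))) :
    HasSum (fun k : ℤ => (π⁻¹ * ∫ t in (0 : ℝ)..π, Circle.exp (-((c + 2 * k) * t)) * f t) *
      ∫ t in (0 : ℝ)..π, Circle.exp ((c + 2 * k) * t) * g t) (∫ t in (0 : ℝ)..π, f t * g t) := by
  have hπ : (π : ℂ) ≠ 0 := Complex.ofReal_ne_zero.2 pi_ne_zero
  have h := (hasSum_fourierCoeffOn_mul_conj pi_pos (memLp_circleExp_mul hf (-c))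
    (memLp_circleExp_mul hg c).star).mul_left (π : ℂ)
  have hfcoeff (k : ℤ) : fourierCoeffOn pi_pos (fun t => Circle.exp (-c * t) * f t) k =
      π⁻¹ * ∫ t in (0 : ℝ)..π, Circle.exp (-((c + 2 * k) * t)) * f t := by
    rw [fourierCoeffOn_zero_pi]
    simp only [← mul_assoc (Circle.exp _ : ℂ), ← Circle.coe_mul, ← Circle.exp_add, neg_mul,
      ← neg_add, ← add_mul, add_comm]
  have hgcoeff (k : ℤ) :
      conj (fourierCoeffOn pi_pos (star fun t => Circle.exp (c * t) * g t : ℝ → ℂ) k) =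
        π⁻¹ * ∫ t in (0 : ℝ)..π, Circle.exp ((c + 2 * k) * t) * g t := by
    rw [fourierCoeffOn_zero_pi, intervalIntegral.integral_of_le pi_pos.le, map_mul, ← integral_conj,
      ← intervalIntegral.integral_of_le pi_pos.le, Complex.conj_ofReal]
    simp only [Pi.star_apply, RCLike.star_def, map_mul, Complex.conj_conj, ← Circle.coe_inv_eq_conj,
      Circle.exp_neg, inv_inv]
    simp only [← mul_assoc (Circle.exp _ : ℂ), ← Circle.coe_mul, ← Circle.exp_add, ← add_mul,
      add_comm]
  have hprod : ∫ t in (0 : ℝ)..π, Circle.exp (-c * t) * f t *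
      conj ((star fun t => Circle.exp (c * t) * g t : ℝ → ℂ) t) =
        ∫ t in (0 : ℝ)..π, f t * g t := by
    refine intervalIntegral.integral_congr fun t _ => ?_
    simp only [neg_mul, Circle.exp_neg, Circle.coe_inv, Circle.coe_exp, Complex.ofReal_mul,
      Pi.star_apply, star_mul', RCLike.star_def, map_mul, RingHomCompTriple.comp_apply,
      RingHom.id_apply]
    field_simp
  simp_rw [hprod, hfcoeff, hgcoeff] at h
  rw [sub_zero, Complex.real_smul, Complex.ofReal_inv, mul_inv_cancel_left₀ hπ] at h
  refine h.congr_fun fun k => ?_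
  rw [Complex.ofReal_inv]
  field_simp

lemma memLp_comp_sub_left {E : Type*} [NormedAddCommGroup E] {f : ℝ → E} {p : ENNReal} {a b : ℝ}
    (hf : MemLp f p (volume.restrict (Ioc a b))) (c : ℝ) :
    MemLp (fun t => f (c - t)) p (volume.restrict (Ioc (c - b) (c - a))) := by
  have h := (volume.measurePreserving_sub_left c).restrict_preimage
    (measurableSet_Ioc (a := a) (b := b))
  rw [preimage_const_sub_Ioc, Measure.restrict_congr_set Ico_ae_eq_Ioc] at h
  exact hf.comp_measurePreserving h

end Parseval

section TwistedLegendre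

/-- The combination `G t + exp (I * π * b) * G (π - t)` of the two Legendre functions. Its Fourier
expansion in the exponentials `exp (I * (b + 2 * k) * t)` only has terms with `0 ≤ k`. -/
noncomputable def twistedLegendre (b t : ℝ) : ℂ :=
  legendreAngle b t + Circle.exp (π * b) * legendreAngle b (π - t)

variable {b : ℝ}

lemma memLp_legendreAngle_pi_sub (hb₀ : 0 < b) (hb₁ : b < 1) :
    MemLp (fun t => legendreAngle b (π - t)) 2 (volume.restrict (Ioc 0 π)) := by
  simpa only [sub_self, sub_zero] using memLp_comp_sub_left (memLp_legendreAngle hb₀ hb₁) π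

lemma memLp_twistedLegendre (hb₀ : 0 < b) (hb₁ : b < 1) :
    MemLp (twistedLegendre b) 2 (volume.restrict (Ioc 0 π)) :=
  MemLp.add (f := fun t => (legendreAngle b t : ℂ)) (memLp_legendreAngle hb₀ hb₁).ofReal
    (MemLp.const_mul (f := fun t => (legendreAngle b (π - t) : ℂ))
      (memLp_legendreAngle_pi_sub hb₀ hb₁).ofReal _)

lemma integral_circleExp_mul_legendreAngle_pi_sub (l : ℝ) :
    ∫ t in (0 : ℝ)..π, Circle.exp (-(l * t)) * (legendreAngle b (π - t) : ℂ) =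
      Circle.exp (-(l * π)) * ∫ t in (0 : ℝ)..π, Circle.exp (l * t) * (legendreAngle b t : ℂ) := by
  have h := intervalIntegral.integral_comp_sub_left (a := 0) (b := π)
    (fun t => (Circle.exp (-(l * (π - t))) : ℂ) * (legendreAngle b t : ℂ)) π
  simp only [sub_sub_cancel, sub_self, sub_zero] at h
  rw [h, ← intervalIntegral.integral_const_mul]
  simp only [← mul_assoc, ← Circle.coe_mul, ← Circle.exp_add]
  ring_nf

lemma integral_circleExp_mul_twistedLegendre (hb₀ : 0 < b) (hb₁ : b < 1) (k : ℤ) :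
    ∫ t in (0 : ℝ)..π, Circle.exp (-((b + 2 * k) * t)) * twistedLegendre b t =
      2 * legendreMoment b (b + 2 * k) := by
  set l : ℝ := b + 2 * k with hl
  have hint {f : ℝ → ℂ} (hf : MemLp f 2 (volume.restrict (Ioc 0 π))) (m : ℝ) :
      IntervalIntegrable (fun t => Circle.exp (m * t) * f t) volume 0 π :=
    (intervalIntegrable_iff_integrableOn_Ioc_of_le pi_pos.le).2
      ((memLp_circleExp_mul hf m).integrable one_le_two)
  have hG : MemLp (fun t => (legendreAngle b t : ℂ)) 2 (volume.restrict (Ioc 0 π)) :=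
    (memLp_legendreAngle hb₀ hb₁).ofReal
  have hG' : MemLp (fun t => (legendreAngle b (π - t) : ℂ)) 2 (volume.restrict (Ioc 0 π)) :=
    (memLp_legendreAngle_pi_sub hb₀ hb₁).ofReal
  have hphase : (Circle.exp (π * b) : ℂ) * Circle.exp (-(l * π)) = 1 := by
    rw [← Circle.coe_mul, ← Circle.exp_add, show π * b + -(l * π) = (-k : ℤ) * (2 * π) by
      rw [hl]; push_cast; ring, Circle.exp_int_mul_two_pi, Circle.coe_one]
  calc ∫ t in (0 : ℝ)..π, Circle.exp (-(l * t)) * twistedLegendre b t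
      = (∫ t in (0 : ℝ)..π, Circle.exp (-l * t) * (legendreAngle b t : ℂ)) + Circle.exp (π * b) *
          ∫ t in (0 : ℝ)..π, Circle.exp (-l * t) * (legendreAngle b (π - t) : ℂ) := by
        rw [← intervalIntegral.integral_const_mul,
          ← intervalIntegral.integral_add (hint hG (-l)) ((hint hG' (-l)).const_mul _)]
        refine intervalIntegral.integral_congr fun t _ => ?_
        simp only [twistedLegendre, neg_mul]
        ring
    _ = ∫ t in (0 : ℝ)..π, (Circle.exp (-l * t) * (legendreAngle b t : ℂ) +
          Circle.exp (l * t) * (legendreAngle b t : ℂ)) := by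
        rw [intervalIntegral.integral_add (hint hG (-l)) (hint hG l)]
        simp only [neg_mul, integral_circleExp_mul_legendreAngle_pi_sub]
        rw [← mul_assoc, hphase, one_mul]
    _ = 2 * legendreMoment b l := by
        rw [legendreMoment, ← intervalIntegral.integral_ofReal,
          ← intervalIntegral.integral_const_mul]
        refine intervalIntegral.integral_congr fun t _ => ?_
        simp only [Circle.coe_exp]
        push_cast
        rw [Complex.cos]
        ring_nf

lemma hasSum_betaWeight_mul_integral_circleExp (hb₀ : 0 < b) (hb₁ : b < 1) {g : ℝ → ℂ}
    (hg : MemLp g 2 (volume.restrict (Ioc 0 π))) :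
    HasSum (fun k : ℕ => ((2 * sin (π * b) / π * betaWeight b k : ℝ) : ℂ) *
      ∫ t in (0 : ℝ)..π, Circle.exp ((b + 2 * k) * t) * g t)
      (∫ t in (0 : ℝ)..π, twistedLegendre b t * g t) := by
  have h := hasSum_integral_circleExp_mul_integral_circleExp b (memLp_twistedLegendre hb₀ hb₁) hg
  simp_rw [integral_circleExp_mul_twistedLegendre hb₀ hb₁] at h
  rw [← (Nat.cast_injective (R := ℤ)).hasSum_iff] at h
  · refine h.congr_fun fun k => ?_
    simp only [Function.comp_apply, Int.cast_natCast, legendreMoment_add_two_mul hb₀ hb₁]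
    push_cast
    ring
  · intro k hk
    obtain ⟨m, rfl⟩ := Int.eq_negSucc_of_lt_zero
      (not_le.1 fun hk₀ => hk ⟨k.toNat, Int.toNat_of_nonneg hk₀⟩)
    rw [show b + 2 * ((Int.negSucc m : ℤ) : ℝ) = b - 2 * (m + 1) by
      rw [Int.cast_negSucc]; push_cast; ring, legendreMoment_sub_two_mul hb₀ hb₁]
    simp

end TwistedLegendre

section SineMoment

lemma memLp_sin_half_smul {E : Type*} [NormedAddCommGroup E] [NormedSpace ℝ E] {p : ENNReal}
    {μ : Measure ℝ} {f : ℝ → E} (hf : MemLp f p μ) : MemLp (fun t => sin (t / 2) • f t) p μ :=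
  hf.smul (memLp_top_of_bound (Continuous.aestronglyMeasurable (by fun_prop)) 1
    (.of_forall fun t => abs_sin_le_one (t / 2)))

lemma integral_sin_mul_mul_sin_half {l : ℝ} (hl₁ : l - 1 / 2 ≠ 0) (hl₂ : l + 1 / 2 ≠ 0) :
    ∫ t in (0 : ℝ)..π, sin (l * t) * sin (t / 2) = -(1 / 2) * cos (π * l) * reciprocalPair l := by
  have hderiv (t : ℝ) : HasDerivAt
      (fun t => (sin ((l - 1 / 2) * t) / (l - 1 / 2) - sin ((l + 1 / 2) * t) / (l + 1 / 2)) / 2)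
      (sin (l * t) * sin (t / 2)) t := by
    refine ((((hasDerivAt_sin_mul (l - 1 / 2) t).div_const (l - 1 / 2)).sub
      ((hasDerivAt_sin_mul (l + 1 / 2) t).div_const (l + 1 / 2))).div_const 2).congr_deriv ?_
    rw [mul_div_cancel_left₀ _ hl₁, mul_div_cancel_left₀ _ hl₂,
      show (l - 1 / 2) * t = l * t - t / 2 by ring, show (l + 1 / 2) * t = l * t + t / 2 by ring,
      cos_sub, cos_add]
    ring
  rw [intervalIntegral.integral_eq_sub_of_hasDerivAt (fun t _ => hderiv t)
    (Continuous.intervalIntegrable (by fun_prop) _ _), mul_zero, mul_zero, sin_zero,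
    show (l - 1 / 2) * π = π * l - π / 2 by ring, show (l + 1 / 2) * π = π * l + π / 2 by ring,
    sin_sub_pi_div_two, sin_add_pi_div_two, reciprocalPair]
  ring

lemma im_integral_circleExp_mul_sin_half {l : ℝ} (hl₁ : l - 1 / 2 ≠ 0) (hl₂ : l + 1 / 2 ≠ 0) :
    (∫ t in (0 : ℝ)..π, (Circle.exp (l * t) : ℂ) * (sin (t / 2) : ℝ)).im =
      -(1 / 2) * cos (π * l) * reciprocalPair l := by
  rw [← integral_sin_mul_mul_sin_half hl₁ hl₂, ← Complex.imCLM_apply,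
    ← Complex.imCLM.intervalIntegral_comp_comm (Continuous.intervalIntegrable (by fun_prop) _ _)]
  refine intervalIntegral.integral_congr fun t _ => ?_
  rw [Complex.imCLM_apply, Complex.im_mul_ofReal, Circle.coe_exp, Complex.exp_ofReal_mul_I_im]

lemma toReal_tsum_tsum_ofReal {ι κ : Type*} {f : ι → κ → ℝ} {g : ι → ℝ} {a : ℝ}
    (hf : ∀ i j, 0 ≤ f i j) (hfg : ∀ i, HasSum (f i) (g i)) (hg : HasSum g a) :
    (∑' i, ∑' j, ENNReal.ofReal (f i j)).toReal = a := by
  have hg₀ (i : ι) : 0 ≤ g i := (hfg i).nonneg (hf i)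
  simp only [← ENNReal.ofReal_tsum_of_nonneg (hf _) (hfg _).summable, (hfg _).tsum_eq]
  rw [← ENNReal.ofReal_tsum_of_nonneg hg₀ hg.summable, hg.tsum_eq,
    ENNReal.toReal_ofReal (hg.nonneg hg₀)]

/-- The imaginary part of the integral of `sin (t / 2) * h t ^ 2` over `[0, π]`, where `h` is the
twisted Legendre function. -/
noncomputable def twistedSineMoment (b : ℝ) : ℝ :=
  (∫ t in (0 : ℝ)..π, twistedLegendre b t * (sin (t / 2) • twistedLegendre b t)).im

variable {b : ℝ}

lemma hasSum_betaWeight_mul_twistedSineMoment (hb₀ : 0 < b) (hb₁ : b < 1) :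
    HasSum (fun k : ℕ => 2 * sin (π * b) / π * betaWeight b k *
      (∫ t in (0 : ℝ)..π, Circle.exp ((b + 2 * k) * t) * (sin (t / 2) • twistedLegendre b t)).im)
      (twistedSineMoment b) := by
  simpa only [Complex.imCLM_apply, Complex.im_ofReal_mul, twistedSineMoment] using
    Complex.imCLM.hasSum (hasSum_betaWeight_mul_integral_circleExp hb₀ hb₁
      (memLp_sin_half_smul (memLp_twistedLegendre hb₀ hb₁)))

lemma hasSum_betaWeight_mul_reciprocalPair (hb₀ : 1 / 4 < b) (hb₁ : b < 1) (k : ℕ) :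
    HasSum (fun j : ℕ => 2 * sin (π * b) / π * betaWeight b j *
      (-(1 / 2) * cos (2 * (π * b)) * reciprocalPair (2 * b + 2 * k + 2 * j)))
      (∫ t in (0 : ℝ)..π,
        Circle.exp ((b + 2 * k) * t) * (sin (t / 2) • twistedLegendre b t)).im := by
  have hmem : MemLp (fun t => (Circle.exp ((b + 2 * k) * t) : ℂ) * (sin (t / 2) : ℝ)) 2
      (volume.restrict (Ioc 0 π)) := by
    refine memLp_circleExp_mul ?_ _
    simpa using memLp_sin_half_smul (memLp_const (p := 2) (μ := volume.restrict (Ioc 0 π)) (1 : ℂ))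
  have h := Complex.imCLM.hasSum
    (hasSum_betaWeight_mul_integral_circleExp (by linarith) hb₁ hmem)
  simp only [Complex.imCLM_apply, Complex.im_ofReal_mul] at h
  have hswap : ∫ t in (0 : ℝ)..π,
      Circle.exp ((b + 2 * k) * t) * (sin (t / 2) • twistedLegendre b t) =
      ∫ t in (0 : ℝ)..π, twistedLegendre b t *
        ((Circle.exp ((b + 2 * k) * t) : ℂ) * (sin (t / 2) : ℝ)) := by
    refine intervalIntegral.integral_congr fun t _ => ?_
    simp only [Complex.real_smul]
    ring
  rw [hswap]
  refine h.congr_fun fun j => ?_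
  have hcos : cos (2 * (π * b)) = cos (π * (2 * b + 2 * k + 2 * j)) := by
    rw [← cos_add_nat_mul_two_pi _ (k + j)]
    push_cast
    ring_nf
  rw [hcos, ← im_integral_circleExp_mul_sin_half (by linarith) (by linarith)]
  simp only [← mul_assoc (Circle.exp _ : ℂ), ← Circle.coe_mul, ← Circle.exp_add]
  ring_nf

lemma reciprocalPair_pos {l : ℝ} (hl : 1 / 2 < l) : 0 < reciprocalPair l :=
  add_pos (one_div_pos.2 (by linarith)) (one_div_pos.2 (by linarith))

lemma tripleBetaTerm_pos (hb : 1 / 4 < b) (n : ℕ) : 0 < tripleBetaTerm b n := by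
  have hbeta := ProbabilityTheory.beta_pos (show 0 < b + n by linarith) one_half_pos
  have hbeta' := ProbabilityTheory.beta_pos (show 0 < 2 * b + n - 1 / 2 by linarith) one_half_pos
  have hcoeff := multichoose_pos (one_half_pos (α := ℝ)) n
  unfold tripleBetaTerm
  positivity

theorem twistedSineMoment_eq_tsum (hb₀ : 1 / 4 < b) (hb₁ : b < 3 / 4) :
    twistedSineMoment b =
      -(1 / 2) * cos (2 * (π * b)) * (2 * sin (π * b) / π) ^ 2 * ∑' n, tripleBetaTerm b n := by
  have hπ := pi_pos
  have hsin : 0 < sin (π * b) := sin_pos_of_pos_of_lt_pi (by nlinarith) (by nlinarith)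
  have hcos : cos (2 * (π * b)) < 0 :=
    cos_neg_of_pi_div_two_lt_of_lt (by nlinarith) (by nlinarith)
  set c := -(1 / 2) * cos (2 * (π * b)) * (2 * sin (π * b) / π) ^ 2 with hc
  have hc₀ : 0 < c := mul_pos (by linarith) (by positivity)
  have hpos (k j : ℕ) :
      0 ≤ betaWeight b k * betaWeight b j * reciprocalPair (2 * b + 2 * k + 2 * j) := by
    have hb : 0 < b := by linarith
    exact (mul_pos (mul_pos (betaWeight_pos hb k) (betaWeight_pos hb j))
      (reciprocalPair_pos (by linarith))).le
  have hsum (k : ℕ) := (hasSum_betaWeight_mul_reciprocalPair hb₀ (by linarith) k).mul_left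
    (2 * sin (π * b) / π * betaWeight b k / c)
  have htotal := (hasSum_betaWeight_mul_twistedSineMoment (b := b) (by linarith)
    (by linarith)).div_const c
  have h := toReal_tsum_tsum_ofReal hpos
    (fun k => (hsum k).congr_fun fun j => by
      rw [div_mul_eq_mul_div, eq_div_iff hc₀.ne', hc]
      ring)
    (htotal.congr_fun fun k => by ring)
  rw [tsum_tsum_betaWeight_mul_reciprocalPair hb₀,
    ENNReal.tsum_toReal_eq fun _ => ENNReal.ofReal_ne_top] at h
  simp only [ENNReal.toReal_ofReal (tripleBetaTerm_pos hb₀ _).le] at h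
  rw [h, mul_div_cancel₀ _ hc₀.ne']

end SineMoment

section LegendreSquare

lemma image_sin_half_sq_Ioo : (fun t : ℝ => sin (t / 2) ^ 2) '' Ioo 0 π = Ioo 0 1 := by
  refine Subset.antisymm ?_ fun x ⟨hx₀, hx₁⟩ => ?_
  · rintro _ ⟨t, ⟨ht₀, htπ⟩, rfl⟩
    have hsin : 0 < sin (t / 2) := sin_pos_of_pos_of_lt_pi (by linarith) (by linarith)
    have hcos : 0 < cos (t / 2) := cos_pos_of_mem_Ioo ⟨by linarith, by linarith⟩
    exact ⟨by positivity, by nlinarith [sin_sq_add_cos_sq (t / 2)]⟩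
  · have hroot₀ : 0 < √x := sqrt_pos.2 hx₀
    have hroot₁ : √x < 1 := (sqrt_lt_sqrt hx₀.le hx₁).trans_eq sqrt_one
    have harcsin₀ := arcsin_pos.2 hroot₀
    have harcsin₁ := arcsin_lt_pi_div_two.2 hroot₁
    refine ⟨2 * arcsin √x, ⟨by linarith, by linarith⟩, ?_⟩
    simp only [mul_div_cancel_left₀ _ (two_ne_zero (α := ℝ))]
    rw [sin_arcsin (by linarith) hroot₁.le, sq_sqrt hx₀.le]

lemma integral_zero_one_eq_integral_sin_half_sq {E : Type*} [NormedAddCommGroup E] [NormedSpace ℝ E]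
    (f : ℝ → E) : ∫ x in (0 : ℝ)..1, f x =
      ∫ t in (0 : ℝ)..π, (sin (t / 2) * cos (t / 2)) • f (sin (t / 2) ^ 2) := by
  rw [intervalIntegral.integral_of_le zero_le_one, intervalIntegral.integral_of_le pi_pos.le,
    integral_Ioc_eq_integral_Ioo, integral_Ioc_eq_integral_Ioo, ← image_sin_half_sq_Ioo]
  refine integral_image_eq_integral_deriv_smul_of_monotoneOn measurableSet_Ioo (fun t _ => ?_)
    (fun s ⟨hs₀, hsπ⟩ t ⟨_, htπ⟩ hst => ?_) f
  · refine HasDerivAt.hasDerivWithinAt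
      ((((hasDerivAt_id t).div_const 2).sin.pow 2).congr_deriv ?_)
    simp only [id]
    ring
  · have hsin : 0 ≤ sin (s / 2) := sin_nonneg_of_nonneg_of_le_pi (by linarith) (by linarith)
    exact pow_le_pow_left₀ hsin
      (sin_le_sin_of_le_of_le_pi_div_two (by linarith) (by linarith) (by linarith)) 2

variable {b : ℝ}

lemma integral_pFq_sq_div_sqrt_one_sub (b : ℝ) :
    ∫ x in (0 : ℝ)..1, pFq [b, 1 - b] [1] x ^ 2 / √(1 - x) =
      ∫ t in (0 : ℝ)..π, sin (t / 2) * legendreAngle b (π - t) ^ 2 := by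
  rw [integral_zero_one_eq_integral_sin_half_sq, intervalIntegral.integral_of_le pi_pos.le,
    intervalIntegral.integral_of_le pi_pos.le, integral_Ioc_eq_integral_Ioo,
    integral_Ioc_eq_integral_Ioo]
  refine setIntegral_congr_fun measurableSet_Ioo fun t ⟨ht₀, htπ⟩ => ?_
  have hcos : 0 < cos (t / 2) := cos_pos_of_mem_Ioo ⟨by linarith, by linarith⟩
  simp only [smul_eq_mul, legendreAngle]
  rw [← cos_sq', sqrt_sq hcos.le, show (π - t) / 2 = π / 2 - t / 2 by ring, cos_pi_div_two_sub]
  field_simp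

lemma twistedSineMoment_eq_add (hb₀ : 0 < b) (hb₁ : b < 1) :
    twistedSineMoment b =
      2 * sin (π * b) *
        (∫ t in (0 : ℝ)..π, sin (t / 2) * legendreAngle b t * legendreAngle b (π - t)) +
      sin (2 * (π * b)) * ∫ t in (0 : ℝ)..π, sin (t / 2) * legendreAngle b (π - t) ^ 2 := by
  have hh := memLp_twistedLegendre hb₀ hb₁
  have hG := memLp_legendreAngle hb₀ hb₁
  have hG' := memLp_legendreAngle_pi_sub hb₀ hb₁
  have hint {𝕜 : Type} [RCLike 𝕜] {f g : ℝ → 𝕜} (hf : MemLp f 2 (volume.restrict (Ioc 0 π)))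
      (hg : MemLp g 2 (volume.restrict (Ioc 0 π))) :
      IntervalIntegrable (fun t => f t * g t) volume 0 π :=
    (intervalIntegrable_iff_integrableOn_Ioc_of_le pi_pos.le).2 (hf.integrable_mul hg)
  have hcross : IntervalIntegrable
      (fun t => sin (t / 2) * legendreAngle b t * legendreAngle b (π - t)) volume 0 π :=
    hint (memLp_sin_half_smul hG) hG'
  have hsq : IntervalIntegrable
      (fun t => sin (t / 2) * legendreAngle b (π - t) ^ 2) volume 0 π := by
    simpa only [smul_eq_mul, mul_assoc, ← sq] using hint (memLp_sin_half_smul hG') hG'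
  rw [twistedSineMoment, ← Complex.imCLM_apply,
    ← Complex.imCLM.intervalIntegral_comp_comm (hint hh (memLp_sin_half_smul hh)),
    ← intervalIntegral.integral_const_mul, ← intervalIntegral.integral_const_mul,
    ← intervalIntegral.integral_add (hcross.const_mul _) (hsq.const_mul _)]
  refine intervalIntegral.integral_congr fun t _ => ?_
  have hexp : (Circle.exp (π * b) : ℂ) = ⟨cos (π * b), sin (π * b)⟩ := by
    rw [Circle.coe_exp]
    exact Complex.ext (Complex.exp_ofReal_mul_I_re _) (Complex.exp_ofReal_mul_I_im _)
  simp only [Complex.imCLM_apply, twistedLegendre, hexp, sin_two_mul, Complex.mul_im,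
    Complex.smul_im, Complex.smul_re, Complex.add_im, Complex.add_re, Complex.mul_re,
    Complex.ofReal_re, Complex.ofReal_im, smul_eq_mul]
  ring

-- Replacing `b` by `1 - b` keeps the Legendre functions and `sin (π * b)` but changes the sign of
-- `sin (2 * π * b)`, so subtracting the two moments removes the cross term.
lemma twistedSineMoment_sub_twistedSineMoment_one_sub (hb₀ : 0 < b) (hb₁ : b < 1) :
    twistedSineMoment b - twistedSineMoment (1 - b) =
      2 * sin (2 * (π * b)) * ∫ t in (0 : ℝ)..π, sin (t / 2) * legendreAngle b (π - t) ^ 2 := by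
  rw [twistedSineMoment_eq_add hb₀ hb₁, twistedSineMoment_eq_add (b := 1 - b) (by linarith)
    (by linarith), legendreAngle_one_sub, show π * (1 - b) = π - π * b by ring, sin_pi_sub,
    show 2 * (π - π * b) = 2 * π - 2 * (π * b) by ring, sin_two_pi_sub]
  ring

open ProbabilityTheory

lemma tsum_tripleBetaTerm (hb : 1 / 4 < b) :
    ∑' n, tripleBetaTerm b n = beta b (1 / 2) ^ 2 * beta (2 * b - 1 / 2) (1 / 2) *
      pFq [1 / 2, b, b, 2 * b - 1 / 2] [b + 1 / 2, b + 1 / 2, 2 * b] 1 := by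
  rw [pFq, ← tsum_mul_left]
  refine tsum_congr fun n => ?_
  rw [tripleBetaTerm, multichoose_eq_ris_div_factorial,
    show 2 * b + n - 1 / 2 = 2 * b - 1 / 2 + n by ring, beta_add_natCast (by linarith) one_half_pos,
    beta_add_natCast (by linarith) one_half_pos, sub_add_cancel]
  simp only [List.map_cons, List.map_nil, List.prod_cons, List.prod_nil, one_pow]
  field_simp

theorem laporta_integral_hypergeometric_general (hb₀ : 1 / 4 < b) (hb₁ : b < 3 / 4)
    (hb : b ≠ 1 / 2) :
    ∫ x in (0 : ℝ)..1, pFq [b, 1 - b] [1] x ^ 2 / √(1 - x) =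
      -(tan (π * b) * cos (2 * (π * b)) / (2 * π ^ 2)) *
        (beta b (1 / 2) ^ 2 * beta (2 * b - 1 / 2) (1 / 2) *
            pFq [1 / 2, b, b, 2 * b - 1 / 2] [b + 1 / 2, b + 1 / 2, 2 * b] 1 -
          beta (1 - b) (1 / 2) ^ 2 * beta (2 * (1 - b) - 1 / 2) (1 / 2) *
            pFq [1 / 2, 1 - b, 1 - b, 2 * (1 - b) - 1 / 2]
              [1 - b + 1 / 2, 1 - b + 1 / 2, 2 * (1 - b)] 1) := by
  have hπ := pi_pos
  have hsin : sin (π * b) ≠ 0 := (sin_pos_of_pos_of_lt_pi (by nlinarith) (by nlinarith)).ne'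
  have hcos : cos (π * b) ≠ 0 := fun h => hb <| mul_left_cancel₀ hπ.ne' <|
    (injOn_cos ⟨by nlinarith, by nlinarith⟩ ⟨by linarith, by linarith⟩
      (h.trans cos_pi_div_two.symm)).trans (by ring)
  have h := twistedSineMoment_sub_twistedSineMoment_one_sub (b := b) (by linarith) (by linarith)
  rw [twistedSineMoment_eq_tsum hb₀ hb₁,
    twistedSineMoment_eq_tsum (b := 1 - b) (by linarith) (by linarith),
    show 2 * (π * (1 - b)) = 2 * π - 2 * (π * b) by ring, cos_two_pi_sub,
    show π * (1 - b) = π - π * b by ring, sin_pi_sub] at h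
  rw [integral_pFq_sq_div_sqrt_one_sub, ← tsum_tripleBetaTerm hb₀,
    ← tsum_tripleBetaTerm (b := 1 - b) (by linarith), tan_eq_sin_div_cos]
  rw [sin_two_mul] at h
  field_simp
  field_simp at h
  linear_combination -h

end LegendreSquare

section GammaValues

lemma Gamma_two_thirds : Gamma (2 / 3) = 2 * √π ^ 2 / (√3 * Gamma (1 / 3)) := by
  have h := Gamma_mul_Gamma_one_sub (1 / 3)
  rw [show (1 : ℝ) - 1 / 3 = 2 / 3 by norm_num, mul_one_div, sin_pi_div_three] at h
  rw [sq_sqrt pi_pos.le]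
  field_simp at h ⊢
  linarith

lemma two_rpow_one_third_pow_three : ((2 : ℝ) ^ (1 / 3 : ℝ)) ^ 3 = 2 := by
  rw [← rpow_mul_natCast two_pos.le]
  norm_num

lemma Gamma_one_sixth :
    Gamma (1 / 6) = √3 * Gamma (1 / 3) ^ 2 / ((2 : ℝ) ^ (1 / 3 : ℝ) * √π) := by
  have h := Gamma_mul_Gamma_add_half (1 / 6)
  rw [show (1 / 6 : ℝ) + 1 / 2 = 2 / 3 by norm_num, show 2 * (1 / 6 : ℝ) = 1 / 3 by norm_num,
    show (1 : ℝ) - 1 / 3 = 1 / 3 + 1 / 3 by norm_num, rpow_add two_pos, Gamma_two_thirds] at h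
  have hc := two_rpow_one_third_pow_three
  set c : ℝ := 2 ^ (1 / 3 : ℝ)
  have hc₀ : 0 < c := by positivity
  field_simp at h ⊢
  linear_combination c / 2 * h + √3 * Gamma (1 / 3) ^ 2 / 2 * hc

lemma Gamma_five_sixths :
    Gamma (5 / 6) = 2 * (2 : ℝ) ^ (1 / 3 : ℝ) * √π ^ 3 / (√3 * Gamma (1 / 3) ^ 2) := by
  have h := Gamma_mul_Gamma_one_sub (1 / 6)
  rw [show (1 : ℝ) - 1 / 6 = 5 / 6 by norm_num, mul_one_div, sin_pi_div_six, Gamma_one_sixth] at h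
  field_simp at h ⊢
  linear_combination h - 2 * (2 : ℝ) ^ (1 / 3 : ℝ) * √π * sq_sqrt pi_pos.le

open ProbabilityTheory

lemma beta_one_third_sq_mul_beta_one_sixth :
    beta (1 / 3) (1 / 2) ^ 2 * beta (1 / 6) (1 / 2) =
      9 / 16 * √π ^ 3 * (Gamma (1 / 3) / √π) ^ 9 := by
  have hc := two_rpow_one_third_pow_three
  have hsqrt : √3 ^ 4 = 9 := by rw [pow_mul √3 2 2, sq_sqrt (by norm_num)]; norm_num
  rw [beta, beta, show (1 / 3 : ℝ) + 1 / 2 = 5 / 6 by norm_num,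
    show (1 / 6 : ℝ) + 1 / 2 = 2 / 3 by norm_num, Gamma_one_half_eq, Gamma_two_thirds,
    Gamma_one_sixth, Gamma_five_sixths]
  field_simp
  rw [hc, hsqrt]
  norm_num

lemma beta_two_thirds_sq_mul_beta_five_sixths :
    beta (2 / 3) (1 / 2) ^ 2 * beta (5 / 6) (1 / 2) =
      192 / √3 * √π ^ 3 * (√π / Gamma (1 / 3)) ^ 9 := by
  have hc := two_rpow_one_third_pow_three
  have hsqrt : √3 ^ 4 = 9 := by rw [pow_mul √3 2 2, sq_sqrt (by norm_num)]; norm_num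
  rw [beta, beta, show (2 / 3 : ℝ) + 1 / 2 = 1 / 6 + 1 by norm_num,
    show (5 / 6 : ℝ) + 1 / 2 = 1 / 3 + 1 by norm_num, Gamma_add_one (by norm_num),
    Gamma_add_one (by norm_num), Gamma_one_half_eq, Gamma_two_thirds,
    Gamma_one_sixth, Gamma_five_sixths]
  field_simp
  rw [hc, hsqrt]
  norm_num

end GammaValues

theorem laporta_integral_hypergeometric :
    (∫ x in (0:ℝ)..1, (pFq [1/3, 2/3] [1] x)^2 / Real.sqrt (1 - x))
    = (9 / Real.sqrt π) *
        ((Real.sqrt 3 / 64) * (Gamma (1/3) / Real.sqrt π)^9 *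
            pFq [1/6, 1/3, 1/3, 1/2] [2/3, 5/6, 5/6] 1
          - (16/3) * (Real.sqrt π / Gamma (1/3))^9 *
            pFq [1/2, 2/3, 2/3, 5/6] [7/6, 7/6, 4/3] 1) := by
  have htan : tan (π * (1 / 3)) = √3 := by rw [mul_one_div, tan_pi_div_three]
  have hcos : cos (2 * (π * (1 / 3))) = -(1 / 2) := by
    rw [cos_two_mul, mul_one_div, cos_pi_div_three]
    norm_num
  have hperm : pFq [1/2, 1/3, 1/3, 1/6] [5/6, 5/6, 2/3] 1 =
      pFq [1/6, 1/3, 1/3, 1/2] [2/3, 5/6, 5/6] 1 :=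
    pFq_perm (List.reverse_perm [1/6, 1/3, 1/3, 1/2]) (List.reverse_perm [2/3, 5/6, 5/6]) 1
  have h := laporta_integral_hypergeometric_general (b := 1 / 3) (by norm_num) (by norm_num)
    (by norm_num)
  norm_num [htan, hcos] at h
  rw [h, hperm, beta_one_third_sq_mul_beta_one_sixth, beta_two_thirds_sq_mul_beta_five_sixths]
  have hpi : π ^ 2 = √π ^ 4 := by rw [pow_mul √π 2 2, sq_sqrt pi_pos.le]
  rw [hpi]
  field_simp
  ring
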